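/- Fix an integer d ≥ 1, δ ∈ (0,1), K > 0, and T ∈ (0,∞). Let a^{jk} : ℝ² → ℝ (1 ≤ j,k ≤ d) be measurable functions of (t,x¹) only (independent of x'), with a^{jk} = a^{kj} and δ|θ|² ≤ Σ_{j,k=1}^d a^{jk}(t,x¹) θ^j θ^k ≤ δ⁻¹|θ|² for all (t,x¹) and θ ∈ ℝ^d; let b^j, c : ℝ^{d+1} → ℝ be measurable with |b^j| ≤ K and |c| ≤ K. Set Lu = u_t + Σ_{j,k} a^{jk} u_{x^j x^k} + Σ_j b^j u_{x^j} + c u. Then there exists N = N(d,δ,K,T) such that for every smooth compactly supported u : ℝ^{d+1} → ℝ with u(t,x) = 0 whenever t ≥ T: ‖u‖_{L²(Ω_T)} + ‖u_t‖_{L²(Ω_T)} + ‖u_x‖_{L²(Ω_T)} + ‖u_{xx}‖_{L²(Ω_T)} ≤ N ‖Lu‖_{L²(Ω_T)}. (This is the a priori estimate of the paper's Theorem on unique solvability in W₂^{1,2}(Ω_T).) -/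

import Mathlib

open MeasureTheory

/-- Partial derivative in `t`. -/
noncomputable def pdt {d : ℕ} (u : ℝ × (Fin d → ℝ) → ℝ) : ℝ × (Fin d → ℝ) → ℝ :=
  fun p => fderiv ℝ u p (1, 0)

/-- Partial derivative in `x^j`. -/
noncomputable def pdx {d : ℕ} (j : Fin d) (u : ℝ × (Fin d → ℝ) → ℝ) :
    ℝ × (Fin d → ℝ) → ℝ :=
  fun p => fderiv ℝ u p (0, Pi.single j 1)

/-- Second partial derivative in `x^j, x^k`. -/
noncomputable def pdxx {d : ℕ} (j k : Fin d) (u : ℝ × (Fin d → ℝ) → ℝ) :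
    ℝ × (Fin d → ℝ) → ℝ :=
  pdx j (pdx k u)

/-- `Ω_T = (0,T) × ℝ^d`. -/
def OmegaT (d : ℕ) (T : ℝ) : Set (ℝ × (Fin d → ℝ)) := Set.Ioo 0 T ×ˢ Set.univ

/-- `L²(Ω)` norm on a set `Ω`. -/
noncomputable def L2NormOn {d : ℕ} (s : Set (ℝ × (Fin d → ℝ)))
    (f : ℝ × (Fin d → ℝ) → ℝ) : ℝ :=
  Real.sqrt (∫ q in s, (f q) ^ 2)

open MeasureTheory

section PartA

lemma I_add {α : Type*} [MeasurableSpace α] {μ : Measure α} {f g : α → ℝ}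
    (hf : Integrable f μ) (hg : Integrable g μ) : Integrable (fun q => f q + g q) μ := hf.add hg

lemma I_sub {α : Type*} [MeasurableSpace α] {μ : Measure α} {f g : α → ℝ}
    (hf : Integrable f μ) (hg : Integrable g μ) : Integrable (fun q => f q - g q) μ := hf.sub hg

lemma A_memLp_shift {f : ℝ × ℝ → ℝ} (hf : MemLp f 2) (p : ℝ × ℝ) :
    MemLp (fun q => f (q + p)) 2 :=
  hf.comp_measurePreserving (measurePreserving_add_right volume p)

lemma A_int_mul {f g : ℝ × ℝ → ℝ} (hf : MemLp f 2) (hg : MemLp g 2) :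
    Integrable (fun q => f q * g q) := hf.integrable_mul hg

lemma A_int_sq {f : ℝ × ℝ → ℝ} (hf : MemLp f 2) :
    Integrable (fun q => f q ^ 2) := hf.integrable_sq

lemma A_int_shift (f : ℝ × ℝ → ℝ) (p : ℝ × ℝ) :
    ∫ q, f (q + p) = ∫ q, f q := integral_add_right_eq_self f p

lemma A_e1 {w : ℝ × ℝ → ℝ} (hw : MemLp w 2) (p : ℝ × ℝ) :
    ∫ q, w (q + p) * w q ≤ ∫ q, w q ^ 2 := by
  have h1 := A_memLp_shift hw p
  have h2 : ∫ q, w (q + p) ^ 2 = ∫ q, w q ^ 2 := A_int_shift (fun q => w q ^ 2) p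
  have h3 : ∫ q, w (q + p) * w q ≤ ∫ q, (1/2 * w (q + p) ^ 2 + 1/2 * w q ^ 2) := by
    apply integral_mono (A_int_mul h1 hw)
      (I_add ((A_int_sq h1).const_mul _) ((A_int_sq hw).const_mul _))
    intro q
    simp only
    nlinarith [sq_nonneg (w (q + p) - w q)]
  rw [integral_add ((A_int_sq h1).const_mul _) ((A_int_sq hw).const_mul _),
    integral_const_mul, integral_const_mul, h2] at h3
  linarith

lemma A_e2 {f g : ℝ × ℝ → ℝ} (hf : MemLp f 2) (hg : MemLp g 2) (p : ℝ × ℝ) :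
    ∫ q, f q * (g (q + p) - 2 * g q + g (q - p))
      = - ∫ q, (f (q + p) - f q) * (g (q + p) - g q) := by
  have hg1 := A_memLp_shift hg p
  have hg2 : MemLp (fun q => g (q - p)) 2 := by
    simpa [sub_eq_add_neg] using A_memLp_shift hg (-p)
  have hf1 := A_memLp_shift hf p
  have i1 := A_int_mul hf hg1
  have i2 := A_int_mul hf hg
  have i3 := A_int_mul hf hg2
  have i4 := A_int_mul hf1 hg1
  have i5 := A_int_mul hf1 hg
  have s1 : ∫ q, f (q + p) * g (q + p) = ∫ q, f q * g q :=
    A_int_shift (fun q => f q * g q) p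
  have s2 : ∫ q, f (q + p) * g q = ∫ q, f q * g (q - p) := by
    rw [← A_int_shift (fun q => f q * g (q - p)) p]
    simp
  have l : ∫ q, f q * (g (q + p) - 2 * g q + g (q - p))
      = (∫ q, f q * g (q + p)) - 2 * (∫ q, f q * g q) + ∫ q, f q * g (q - p) := by
    rw [← integral_const_mul, ← integral_sub i1 (i2.const_mul 2),
      ← integral_add (I_sub i1 (i2.const_mul 2)) i3]
    congr 1; ext q; ring
  have r : ∫ q, (f (q + p) - f q) * (g (q + p) - g q)
      = (∫ q, f (q + p) * g (q + p)) - (∫ q, f (q + p) * g q) - (∫ q, f q * g (q + p))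
        + ∫ q, f q * g q := by
    rw [← integral_sub i4 i5, ← integral_sub (I_sub i4 i5) i1,
      ← integral_add (I_sub (I_sub i4 i5) i1) i2]
    congr 1; ext q; ring
  rw [l, r, s1, s2]; ring

/-- discrete energy estimate -/
lemma A_energy {δ κ τ h : ℝ} (hδ : 0 < δ) (hδ1 : δ ≤ 1) (hκ : 0 < κ) (hτ : 0 < τ) (hh : 0 < h)
    {a : ℝ × ℝ → ℝ} (ham : Measurable a) (ha1 : ∀ q, δ ≤ a q) (ha2 : ∀ q, a q ≤ δ⁻¹)
    {w F : ℝ × ℝ → ℝ} (hw : MemLp w 2) (hF2 : MemLp F 2)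
    (hF : ∀ q, F q = (w (q + (τ, 0)) - w q) / τ
      + a q * ((w (q + (0, h)) - 2 * w q + w (q - (0, h))) / h ^ 2) - κ * w q) :
    κ ^ 2 * ∫ q, w q ^ 2 ≤ (4 / δ ^ 2 + 4) * ∫ q, F q ^ 2 := by
  set X : ℝ × ℝ → ℝ := fun q => (w (q + (0, h)) - 2 * w q + w (q - (0, h))) / h ^ 2 with hX
  have w1 := A_memLp_shift hw (τ, 0)
  have wp := A_memLp_shift hw (0, h)
  have wm : MemLp (fun q => w (q - (0, h))) 2 := by
    simpa [sub_eq_add_neg] using A_memLp_shift hw (-(0, h))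
  have hX2 : MemLp X 2 := by
    have := ((wp.sub (hw.const_mul 2)).add wm).const_mul (1 / h ^ 2)
    refine this.congr_norm ?_ ?_
    · have := this.1
      refine this.congr (Filter.Eventually.of_forall fun q => ?_)
      simp [hX]; ring
    · refine Filter.Eventually.of_forall fun q => ?_
      simp only [hX, Pi.add_apply, Pi.sub_apply]
      congr 1; ring
  -- (i)
  have hi : ∫ q, (w (q + (τ, 0)) - w q) * w q ≤ 0 := by
    have := A_e1 hw (τ, 0)
    have e : ∫ q, (w (q + (τ, 0)) - w q) * w q
        = (∫ q, w (q + (τ, 0)) * w q) - ∫ q, w q ^ 2 := by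
      rw [← integral_sub (A_int_mul w1 hw) (A_int_sq hw)]
      congr 1; ext q; ring
    linarith
  -- B
  set B : ℝ × ℝ → ℝ := fun q => w (q + (0, h)) - w q with hB
  have hB2 : MemLp B 2 := wp.sub hw
  have hB1 := A_memLp_shift hB2 (τ, 0)
  have iX : ∀ {f : ℝ × ℝ → ℝ}, MemLp f 2 →
      ∫ q, f q * X q = - (1 / h ^ 2) * ∫ q, (f (q + (0, h)) - f q) * B q := by
    intro f hf
    have := A_e2 hf hw (0, h)
    rw [neg_mul, ← mul_neg, ← this, ← integral_const_mul]
    congr 1; ext q; simp only [hX]; ring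
  have hii : 0 ≤ ∫ q, (w (q + (τ, 0)) - w q) * X q := by
    rw [iX (f := fun q => w (q + (τ, 0)) - w q) (w1.sub hw)]
    have := A_e1 hB2 (τ, 0)
    have e : ∫ q, (w (q + (0, h) + (τ, 0)) - w (q + (0, h)) - (w (q + (τ, 0)) - w q)) * B q
        = (∫ q, B (q + (τ, 0)) * B q) - ∫ q, B q ^ 2 := by
      rw [← integral_sub (A_int_mul hB1 hB2) (A_int_sq hB2)]
      congr 1; ext q; simp only [hB]
      rw [add_right_comm q (0, h) (τ, 0)]; ring
    rw [e]
    have : 0 < 1 / h ^ 2 := by positivity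
    nlinarith
  have hiii : ∫ q, w q * X q ≤ 0 := by
    rw [iX hw]
    have e : ∫ q, (w (q + (0, h)) - w q) * B q = ∫ q, B q ^ 2 := by
      congr 1; ext q; simp only [hB]; ring
    rw [e]
    have : 0 ≤ ∫ q, B q ^ 2 := integral_nonneg fun q => sq_nonneg _
    have : 0 < 1 / h ^ 2 := by positivity
    nlinarith
  -- pointwise
  have hpt : ∀ q, δ / 4 * (κ ^ 2 * w q ^ 2) ≤ (1 / δ + δ) * F q ^ 2
      - (1 / τ) * ((w (q + (τ, 0)) - w q) * X q)
      + (δ * κ / τ) * ((w (q + (τ, 0)) - w q) * w q) + κ * (w q * X q) := by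
    intro q
    have hFq : F q = (w (q + (τ, 0)) - w q) / τ + a q * X q - κ * w q := hF q
    have e : F q * (X q - δ * (κ * w q)) =
        (1 / τ) * ((w (q + (τ, 0)) - w q) * X q)
        - (δ * κ / τ) * ((w (q + (τ, 0)) - w q) * w q) - κ * (w q * X q)
        + (a q * X q ^ 2 - a q * δ * X q * (κ * w q) + δ * (κ * w q) ^ 2) := by
      rw [hFq]; ring
    have y1 : F q * (X q - δ * (κ * w q)) ≤ (1 / δ + δ) * F q ^ 2 + δ / 4 * X q ^ 2
        + δ / 4 * (κ * w q) ^ 2 := by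
      have t1 : F q * X q ≤ 1 / δ * F q ^ 2 + δ / 4 * X q ^ 2 := by
        have : 0 ≤ 1 / δ * (F q - δ / 2 * X q) ^ 2 := by positivity
        have e : 1 / δ * (F q - δ / 2 * X q) ^ 2
          = 1 / δ * F q ^ 2 - F q * X q + δ / 4 * X q ^ 2 := by field_simp; ring
        linarith
      nlinarith [mul_nonneg hδ.le (sq_nonneg (F q + (κ * w q) / 2))]
    have hqa : a q * δ ≤ 1 := by
      have := mul_le_mul_of_nonneg_right (ha2 q) hδ.le
      rwa [inv_mul_cancel₀ hδ.ne'] at this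
    have hap : 0 < a q := hδ.trans_le (ha1 q)
    have y2 : δ / 2 * X q ^ 2 + δ / 2 * (κ * w q) ^ 2 ≤
        a q * X q ^ 2 - a q * δ * X q * (κ * w q) + δ * (κ * w q) ^ 2 := by
      have h1 : a q * δ * X q * (κ * w q) ≤ a q / 2 * X q ^ 2
          + a q * δ ^ 2 / 2 * (κ * w q) ^ 2 := by
        nlinarith [mul_nonneg hap.le (sq_nonneg (X q - δ * (κ * w q)))]
      have h2 : a q * δ ^ 2 / 2 * (κ * w q) ^ 2 ≤ δ / 2 * (κ * w q) ^ 2 := by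
        apply mul_le_mul_of_nonneg_right _ (sq_nonneg _)
        nlinarith
      have h3 : δ / 2 * X q ^ 2 ≤ a q / 2 * X q ^ 2 :=
        mul_le_mul_of_nonneg_right (by linarith [ha1 q]) (sq_nonneg _)
      nlinarith
    have : 0 ≤ δ / 4 * X q ^ 2 := by positivity
    nlinarith
  have j1 : Integrable fun q => δ / 4 * (κ ^ 2 * w q ^ 2) :=
    ((A_int_sq hw).const_mul _).const_mul _
  have k1 : Integrable fun q => (1 / δ + δ) * F q ^ 2 := (A_int_sq hF2).const_mul _
  have k2 : Integrable fun q => (1 / τ) * ((w (q + (τ, 0)) - w q) * X q) :=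
    (A_int_mul (w1.sub hw) hX2).const_mul _
  have k3 : Integrable fun q => (δ * κ / τ) * ((w (q + (τ, 0)) - w q) * w q) :=
    (A_int_mul (w1.sub hw) hw).const_mul _
  have k4 : Integrable fun q => κ * (w q * X q) := (A_int_mul hw hX2).const_mul _
  have := integral_mono j1 (I_add (I_add (I_sub k1 k2) k3) k4) hpt
  have e : ∫ q, ((1 / δ + δ) * F q ^ 2
      - (1 / τ) * ((w (q + (τ, 0)) - w q) * X q)
      + (δ * κ / τ) * ((w (q + (τ, 0)) - w q) * w q) + κ * (w q * X q))
      = (1 / δ + δ) * (∫ q, F q ^ 2) - (1 / τ) * (∫ q, (w (q + (τ, 0)) - w q) * X q)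
        + (δ * κ / τ) * (∫ q, (w (q + (τ, 0)) - w q) * w q) + κ * ∫ q, w q * X q := by
    rw [integral_add (I_add (I_sub k1 k2) k3) k4, integral_add (I_sub k1 k2) k3,
      integral_sub k1 k2]
    simp only [integral_const_mul]
  rw [e, integral_const_mul, integral_const_mul] at this
  have p1 : 0 ≤ (1 / τ) * (∫ q, (w (q + (τ, 0)) - w q) * X q) := by positivity
  have p2 : (δ * κ / τ) * (∫ q, (w (q + (τ, 0)) - w q) * w q) ≤ 0 :=
    mul_nonpos_of_nonneg_of_nonpos (by positivity) hi
  have p3 : κ * ∫ q, w q * X q ≤ 0 := mul_nonpos_of_nonneg_of_nonpos hκ.le hiii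
  have fin : δ / 4 * (κ ^ 2 * ∫ q, w q ^ 2) ≤ (1 / δ + δ) * ∫ q, F q ^ 2 := by linarith
  have : (4 / δ ^ 2 + 4) * ∫ q, F q ^ 2 = 4 / δ * ((1 / δ + δ) * ∫ q, F q ^ 2) := by
    field_simp
  rw [this]
  calc κ ^ 2 * ∫ q, w q ^ 2 = 4 / δ * (δ / 4 * (κ ^ 2 * ∫ q, w q ^ 2)) := by field_simp
    _ ≤ _ := mul_le_mul_of_nonneg_left fin (by positivity)

end PartA

open MeasureTheory

section PartA2

lemma A_vol (R : ℝ) (hR : 0 ≤ R) :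
    (volume : Measure (ℝ × ℝ)).real (Metric.closedBall (0 : ℝ × ℝ) R) = (2 * R) ^ 2 := by
  have : Metric.closedBall (0 : ℝ × ℝ) R
      = Metric.closedBall (0 : ℝ) R ×ˢ Metric.closedBall (0 : ℝ) R :=
    (closedBall_prod_same 0 0 R).symm
  rw [this, Measure.real, Measure.volume_eq_prod, Measure.prod_prod, Real.volume_closedBall,
    ENNReal.toReal_mul, ENNReal.toReal_ofReal (by positivity)]
  ring

lemma A_memLp_bdd {f : ℝ × ℝ → ℝ} (hm : Measurable f) {C R : ℝ} (hb : ∀ q, |f q| ≤ C)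
    (hs : ∀ q, R < ‖q‖ → f q = 0) : MemLp f 2 := by
  have h1 : MemLp f ⊤ := memLp_top_of_bound hm.aestronglyMeasurable C
    (Filter.Eventually.of_forall hb)
  have h2 : f = (Metric.closedBall (0 : ℝ × ℝ) R).indicator f := by
    ext q
    by_cases hq : q ∈ Metric.closedBall (0 : ℝ × ℝ) R
    · simp [hq]
    · simp only [Set.indicator_of_notMem hq]
      apply hs; simpa using hq
  have h3 : MemLp f ⊤ (volume.restrict (Metric.closedBall (0 : ℝ × ℝ) R)) := h1.restrict _
  have : IsFiniteMeasure (volume.restrict (Metric.closedBall (0 : ℝ × ℝ) R)) :=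
    ⟨by simpa using (isCompact_closedBall (0 : ℝ × ℝ) R).measure_lt_top⟩
  rw [h2, memLp_indicator_iff_restrict Metric.isClosed_closedBall.measurableSet]
  exact h3.mono_exponent le_top

lemma A_int_bdd {f : ℝ × ℝ → ℝ} (hm : Measurable f) {C R : ℝ} (hR : 0 ≤ R) (hb : ∀ q, |f q| ≤ C)
    (hs : ∀ q, R < ‖q‖ → f q = 0) : ∫ q, f q ^ 2 ≤ C ^ 2 * (2 * R) ^ 2 := by
  have hi := (A_memLp_bdd hm hb hs).integrable_sq
  have h2 : ∫ q, f q ^ 2 = ∫ q in Metric.closedBall (0 : ℝ × ℝ) R, f q ^ 2 := by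
    rw [setIntegral_eq_integral_of_forall_compl_eq_zero]
    intro q hq
    rw [hs q (by simpa using hq)]; simp
  rw [h2]
  have : ∫ q in Metric.closedBall (0 : ℝ × ℝ) R, f q ^ 2
      ≤ ∫ q in Metric.closedBall (0 : ℝ × ℝ) R, C ^ 2 := by
    apply setIntegral_mono hi.integrableOn
    · exact integrableOn_const (isCompact_closedBall (0 : ℝ × ℝ) R).measure_lt_top.ne
    · intro q
      exact sq_le_sq' (by linarith [neg_abs_le (f q), hb q]) ((le_abs_self _).trans (hb q))
  refine this.trans_eq ?_
  rw [setIntegral_const, A_vol R hR, smul_eq_mul]; ring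

noncomputable def A_D (τ h κ : ℝ) (a : ℝ × ℝ → ℝ) (q : ℝ × ℝ) : ℝ := 1 / τ + κ + 2 * a q / h ^ 2

noncomputable def A_W (τ h κ : ℝ) (a G ρ : ℝ × ℝ → ℝ) : ℕ → ℝ × ℝ → ℝ
  | 0 => ρ
  | n + 1 => fun q => (A_W τ h κ a G ρ n (q + (τ, 0)) / τ
      + a q / h ^ 2 * (A_W τ h κ a G ρ n (q + (0, h)) + A_W τ h κ a G ρ n (q - (0, h))) + G q)
        / A_D τ h κ a q

lemma A_discrete {δ κ τ h : ℝ} (hδ : 0 < δ) (hδ1 : δ ≤ 1) (hκ : 0 < κ) (hτ : 0 < τ) (hh : 0 < h)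
    {a : ℝ × ℝ → ℝ} (ham : Measurable a) (ha1 : ∀ q, δ ≤ a q) (ha2 : ∀ q, a q ≤ δ⁻¹)
    {ρ G : ℝ × ℝ → ℝ} (hρm : Measurable ρ) (hGm : Measurable G) {M R : ℝ} (hR : 0 ≤ R)
    (hρ0 : ∀ q, 0 ≤ ρ q) (hρM : ∀ q, ρ q ≤ M) (hG0 : ∀ q, 0 ≤ G q) (hGM : ∀ q, G q ≤ M)
    (hρs : ∀ q, R < ‖q‖ → ρ q = 0) (hGs : ∀ q, R < ‖q‖ → G q = 0)
    (hsub : ∀ q, - G q ≤ (ρ (q + (τ, 0)) - ρ q) / τ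
      + a q * ((ρ (q + (0, h)) - 2 * ρ q + ρ (q - (0, h))) / h ^ 2) - κ * ρ q) :
    κ ^ 2 * ∫ q, ρ q ^ 2 ≤ (4 / δ ^ 2 + 4) * (2 * ∫ q, G q ^ 2) := by
  set D := A_D τ h κ a with hD
  set W := A_W τ h κ a G ρ with hW
  have W0 : W 0 = ρ := rfl
  have WS : ∀ n q, W (n + 1) q = (W n (q + (τ, 0)) / τ
      + a q / h ^ 2 * (W n (q + (0, h)) + W n (q - (0, h))) + G q) / D q := fun n q => rfl
  have hap : ∀ q, 0 < a q := fun q => hδ.trans_le (ha1 q)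
  have Dq : ∀ q, D q = 1 / τ + κ + 2 * a q / h ^ 2 := fun q => rfl
  have Dpos : ∀ q, 0 < D q := fun q => by
    rw [Dq]; have := hap q; positivity
  have Dm : Measurable D := by
    have : D = fun q => 1 / τ + κ + 2 * a q / h ^ 2 := rfl
    rw [this]; fun_prop
  set Dx : ℝ := 1 / τ + κ + 2 * δ⁻¹ / h ^ 2 with hDx
  have Dle : ∀ q, D q ≤ Dx := fun q => by
    rw [Dq, hDx]; have := ha2 q; gcongr
  have Dxpos : 0 < Dx := by positivity
  set θ : ℝ := 1 - κ / Dx with hθ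
  have hκD : κ < Dx := by
    have : 0 < 1 / τ + 2 * δ⁻¹ / h ^ 2 := by positivity
    rw [hDx]; linarith
  have θ0 : 0 ≤ θ := by rw [hθ, sub_nonneg, div_le_one Dxpos]; exact hκD.le
  have θ1 : θ < 1 := by rw [hθ]; have : 0 < κ / Dx := by positivity
                        linarith
  have hcoef : ∀ q, (1 / τ + 2 * a q / h ^ 2) ≤ θ * D q := by
    intro q
    have : κ / Dx * D q ≤ κ := by
      rw [div_mul_eq_mul_div, div_le_iff₀ Dxpos]
      exact mul_le_mul_of_nonneg_left (Dle q) hκ.le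
    rw [hθ, sub_mul, one_mul]
    have := Dq q
    linarith
  set s : ℝ := τ + h with hs
  have hnorm : ∀ q p : ℝ × ℝ, ‖p‖ ≤ s → ‖q‖ - s ≤ ‖q + p‖ := by
    intro q p hp
    have := norm_sub_le (q + p) p
    rw [add_sub_cancel_right] at this
    linarith
  have np1 : ‖((τ, 0) : ℝ × ℝ)‖ ≤ s := by
    simp [Prod.norm_def, abs_of_pos hτ, hs, hh.le, hτ.le]
  have np2 : ‖((0, h) : ℝ × ℝ)‖ ≤ s := by
    simp [Prod.norm_def, abs_of_pos hh, hs, hh.le, hτ.le]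
  have np3 : ‖-((0, h) : ℝ × ℝ)‖ ≤ s := by rwa [norm_neg]
  have hs0 : 0 < s := by positivity
  have Wm : ∀ n, Measurable (W n) := by
    intro n
    induction n with
    | zero => exact hρm
    | succ n ih =>
      have : W (n + 1) = fun q => (W n (q + (τ, 0)) / τ
        + a q / h ^ 2 * (W n (q + (0, h)) + W n (q - (0, h))) + G q) / D q := rfl
      rw [this]
      have i1 : Measurable fun q : ℝ × ℝ => W n (q + (τ, 0)) := ih.comp (measurable_id.add_const _)
      have i2 : Measurable fun q : ℝ × ℝ => W n (q + (0, h)) := ih.comp (measurable_id.add_const _)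
      have i3 : Measurable fun q : ℝ × ℝ => W n (q - (0, h)) := ih.comp (measurable_id.sub_const _)
      fun_prop
  have Ws : ∀ n : ℕ, ∀ q, R + n * s < ‖q‖ → W n q = 0 := by
    intro n
    induction n with
    | zero => intro q hq; exact hρs q (by simpa using hq)
    | succ n ih =>
      intro q hq
      push_cast at hq
      have hn : 0 ≤ (n : ℝ) * s := by positivity
      rw [WS, ih _ (by linarith [hnorm q _ np1]), ih _ (by linarith [hnorm q _ np2]),
        sub_eq_add_neg, ih _ (by linarith [hnorm q _ np3]), hGs q (by linarith)]
      simp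
  have Wmono : ∀ n q, W n q ≤ W (n + 1) q := by
    intro n
    induction n with
    | zero =>
      intro q
      rw [WS, le_div_iff₀ (Dpos q), W0, Dq]
      have := hsub q
      have e : (ρ (q + (τ, 0)) - ρ q) / τ
        + a q * ((ρ (q + (0, h)) - 2 * ρ q + ρ (q - (0, h))) / h ^ 2) - κ * ρ q
        = ρ (q + (τ, 0)) / τ + a q / h ^ 2 * (ρ (q + (0, h)) + ρ (q - (0, h)))
          - ρ q * (1 / τ + κ + 2 * a q / h ^ 2) := by field_simp; ring
      linarith
    | succ n ih =>
      intro q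
      rw [WS (n + 1), WS n]
      have h1 := ih (q + (τ, 0))
      have h2 := ih (q + (0, h))
      have h3 := ih (q - (0, h))
      have := hap q
      have := Dpos q
      gcongr
  have W0nn : ∀ n q, 0 ≤ W n q := by
    intro n q
    induction n with
    | zero => exact hρ0 q
    | succ n ih => exact ih.trans (Wmono n q)
  have hM : 0 ≤ M := (hρ0 0).trans (hρM 0)
  set C : ℝ := M + M / κ with hC
  have hC0 : 0 ≤ C := by positivity
  have Wb : ∀ n q, W n q ≤ C := by
    intro n
    induction n with
    | zero => intro q; have := hρM q; rw [W0, hC]; have : 0 ≤ M / κ := by positivity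
              linarith
    | succ n ih =>
      intro q
      rw [WS, div_le_iff₀ (Dpos q)]
      have h1 := ih (q + (τ, 0))
      have h2 := ih (q + (0, h))
      have h3 := ih (q - (0, h))
      have h4 : W n (q + (τ, 0)) / τ ≤ C / τ := by gcongr
      have h5 : a q / h ^ 2 * (W n (q + (0, h)) + W n (q - (0, h))) ≤ a q / h ^ 2 * (C + C) := by
        have := hap q
        gcongr
      have h6 : M ≤ κ * C := by
        rw [hC, mul_add, mul_div_cancel₀ _ hκ.ne']
        have : 0 ≤ κ * M := by positivity
        linarith
      have := hGM q
      have e : C * D q = C / τ + a q / h ^ 2 * (C + C) + κ * C := by rw [Dq]; ring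
      linarith
  have Wd : ∀ n q, W (n + 1) q - W n q ≤ C * θ ^ n := by
    intro n
    induction n with
    | zero => intro q; have := Wb 1 q; have := W0nn 0 q; simp only [pow_zero]; linarith
    | succ n ih =>
      intro q
      rw [WS (n + 1) q, WS n q, ← sub_div, div_le_iff₀ (Dpos q)]
      have h1 := ih (q + (τ, 0))
      have h2 := ih (q + (0, h))
      have h3 := ih (q - (0, h))
      have h4 : (W (n + 1) (q + (τ, 0)) - W n (q + (τ, 0))) / τ ≤ C * θ ^ n / τ := by gcongr
      have h5 : a q / h ^ 2 * ((W (n + 1) (q + (0, h)) - W n (q + (0, h)))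
          + (W (n + 1) (q - (0, h)) - W n (q - (0, h)))) ≤
            a q / h ^ 2 * (C * θ ^ n + C * θ ^ n) := by
        have := hap q
        gcongr
      have h6 : C * θ ^ n * (1 / τ + 2 * a q / h ^ 2) ≤ C * θ ^ n * (θ * D q) :=
        mul_le_mul_of_nonneg_left (hcoef q) (by positivity)
      have e1 : C * θ ^ n * (1 / τ + 2 * a q / h ^ 2) =
         C * θ ^ n / τ + a q / h ^ 2 * (C * θ ^ n + C * θ ^ n) := by ring
      have e2 : C * θ ^ (n + 1) * D q = C * θ ^ n * (θ * D q) := by ring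
      rw [e2]
      rw [sub_div] at h4
      linarith
  have WL : ∀ n, MemLp (W n) 2 := fun n => A_memLp_bdd (Wm n)
    (fun q => by rw [abs_of_nonneg (W0nn n q)]; exact Wb n q) (Ws n)
  have GLp : MemLp G 2 := A_memLp_bdd hGm
    (fun q => by rw [abs_of_nonneg (hG0 q)]; exact hGM q) hGs
  -- error
  set e : ℕ → ℝ × ℝ → ℝ := fun n q => D q * (W (n + 1) q - W n q) with he
  have em : ∀ n, Measurable (e n) := fun n => Dm.mul ((Wm (n + 1)).sub (Wm n))
  have eb : ∀ n q, |e n q| ≤ Dx * (C * θ ^ n) := by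
    intro n q
    have h1 : 0 ≤ W (n + 1) q - W n q := sub_nonneg.2 (Wmono n q)
    rw [abs_of_nonneg (mul_nonneg (Dpos q).le h1)]
    exact mul_le_mul (Dle q) (Wd n q) h1 Dxpos.le
  have es : ∀ n : ℕ, ∀ q, R + (n + 1) * s < ‖q‖ → e n q = 0 := by
    intro n q hq
    simp only [he]
    rw [Ws (n + 1) q (by push_cast; linarith), Ws n q (by linarith)]; simp
  have eL : ∀ n, MemLp (e n) 2 := fun n => A_memLp_bdd (em n) (eb n) (es n)
  have key : ∀ n : ℕ, κ ^ 2 * ∫ q, ρ q ^ 2 ≤ (4 / δ ^ 2 + 4) *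
      (2 * (∫ q, G q ^ 2) + 2 * ((Dx * (C * θ ^ n)) ^ 2 * (2 * (R + (n + 1) * s)) ^ 2)) := by
    intro n
    have hF : ∀ q, (e n q - G q) = (W n (q + (τ, 0)) - W n q) / τ
      + a q * ((W n (q + (0, h)) - 2 * W n q + W n (q - (0, h))) / h ^ 2) - κ * W n q := by
      intro q
      simp only [he]
      rw [mul_sub, WS, mul_div_cancel₀ _ (Dpos q).ne', Dq]
      field_simp; ring
    have FL : MemLp (fun q => e n q - G q) 2 := (eL n).sub GLp
    have h1 := A_energy hδ hδ1 hκ hτ hh ham ha1 ha2 (WL n) FL hF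
    have h2 : ∫ q, ρ q ^ 2 ≤ ∫ q, W n q ^ 2 := by
      apply integral_mono (WL 0).integrable_sq (WL n).integrable_sq
      intro q
      have : ρ q ≤ W n q := by
        have := monotone_nat_of_le_succ (f := fun n => W n q) (fun n => Wmono n q) (Nat.zero_le n)
        exact this
      exact pow_le_pow_left₀ (hρ0 q) this 2
    have h3 : ∫ q, (e n q - G q) ^ 2 ≤ ∫ q, (2 * G q ^ 2 + 2 * e n q ^ 2) := by
      apply integral_mono FL.integrable_sq
        (I_add (GLp.integrable_sq.const_mul 2) ((eL n).integrable_sq.const_mul 2))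
      intro q
      simp only
      nlinarith [sq_nonneg (e n q + G q)]
    rw [integral_add (GLp.integrable_sq.const_mul 2) ((eL n).integrable_sq.const_mul 2),
      integral_const_mul, integral_const_mul] at h3
    have h4 := A_int_bdd (em n) (R := R + (n + 1) * s) (by positivity) (eb n) (es n)
    calc κ ^ 2 * ∫ q, ρ q ^ 2 ≤ κ ^ 2 * ∫ q, W n q ^ 2 := by gcongr
      _ ≤ _ := h1
      _ ≤ _ := by
        apply mul_le_mul_of_nonneg_left _ (by positivity)
        linarith
  have lim : Filter.Tendsto (fun n : ℕ => (4 / δ ^ 2 + 4) *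
      (2 * (∫ q, G q ^ 2) + 2 * ((Dx * (C * θ ^ n)) ^ 2 * (2 * (R + (n + 1) * s)) ^ 2)))
      Filter.atTop (nhds ((4 / δ ^ 2 + 4) * (2 * (∫ q, G q ^ 2) + 2 * (4 * Dx ^ 2 * C ^ 2 *
        ((R + s) * 0 + s * 0) ^ 2)))) := by
    have t1 : Filter.Tendsto (fun n : ℕ => θ ^ n) Filter.atTop (nhds 0) :=
      tendsto_pow_atTop_nhds_zero_of_lt_one θ0 θ1
    have t2 : Filter.Tendsto (fun n : ℕ => (n : ℝ) * θ ^ n) Filter.atTop (nhds 0) :=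
      tendsto_self_mul_const_pow_of_lt_one θ0 θ1
    have t3 := ((t1.const_mul (R + s)).add (t2.const_mul s)).pow 2
    have t4 := (((t3.const_mul (4 * Dx ^ 2 * C ^ 2)).const_mul 2).const_add
      (2 * (∫ q, G q ^ 2))).const_mul (4 / δ ^ 2 + 4)
    refine t4.congr fun n => ?_
    ring
  have := ge_of_tendsto' lim key
  simpa using this

end PartA2

open MeasureTheory

section PartB

lemma B_mvt1 {f f' : ℝ → ℝ} (hf : ∀ x, HasDerivAt f (f' x) x) (x : ℝ) {h : ℝ} (hh : 0 < h) :
    ∃ c, |c - x| ≤ h ∧ (f (x + h) - f x) / h = f' c := by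
  obtain ⟨c, hc, e⟩ := exists_hasDerivAt_eq_slope f f' (a := x) (b := x + h) (by linarith)
    (fun y _ => (hf y).continuousAt.continuousWithinAt) (fun y _ => hf y)
  refine ⟨c, ?_, ?_⟩
  · rw [abs_le]; constructor <;> linarith [hc.1, hc.2]
  · rw [e]; congr 1; ring

lemma B_mvt2 {f f' f'' : ℝ → ℝ} (hf : ∀ x, HasDerivAt f (f' x) x)
    (hf' : ∀ x, HasDerivAt f' (f'' x) x) (x : ℝ) {h : ℝ} (hh : 0 < h) :
    ∃ c, |c - x| ≤ h ∧ (f (x + h) - 2 * f x + f (x - h)) / h ^ 2 = f'' c := by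
  have hk : ∀ s, HasDerivAt (fun s => f (x + s) + f (x - s)) (f' (x + s) - f' (x - s)) s := by
    intro s
    have h1 := (hf (x + s)).comp_const_add x s
    have h2 := (hf (x - s)).comp_const_sub x s
    rw [sub_eq_add_neg]
    exact h1.add h2
  have hg : ∀ s : ℝ, HasDerivAt (fun s => s ^ 2) (2 * s) s := by
    intro s; simpa using hasDerivAt_pow 2 s
  obtain ⟨s, hs, e⟩ := exists_ratio_hasDerivAt_eq_ratio_slope
    (fun s => f (x + s) + f (x - s)) (fun s => f' (x + s) - f' (x - s)) hh
    (fun y _ => (hk y).continuousAt.continuousWithinAt) (fun y _ => hk y)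
    (fun s : ℝ => s ^ 2) (fun s => 2 * s)
    (fun y _ => (hg y).continuousAt.continuousWithinAt) (fun y _ => hg y)
  obtain ⟨c, hc, e2⟩ := exists_hasDerivAt_eq_slope f' f'' (a := x - s) (b := x + s)
    (by linarith [hs.1])
    (fun y _ => (hf' y).continuousAt.continuousWithinAt) (fun y _ => hf' y)
  refine ⟨c, ?_, ?_⟩
  · rw [abs_le]; constructor <;> linarith [hc.1, hc.2, hs.2]
  · have s0 : s ≠ 0 := hs.1.ne'
    rw [eq_div_iff (by linarith [hs.1])] at e2
    rw [← e2] at e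
    simp only [add_zero, sub_zero] at e
    rw [div_eq_iff (by positivity)]
    have : s * (f (x + h) - 2 * f x + f (x - h)) = s * (f'' c * h ^ 2) := by nlinarith
    exact mul_left_cancel₀ s0 this

lemma B_unif {f : ℝ × ℝ → ℝ} (hf : Continuous f) {R : ℝ} (hs : ∀ q, R < ‖q‖ → f q = 0) :
    UniformContinuous f := by
  have : HasCompactSupport f := by
    apply HasCompactSupport.of_support_subset_isCompact (isCompact_closedBall (0 : ℝ × ℝ) R)
    intro q hq
    by_contra h
    exact hq (hs q (by simpa using h))
  exact this.uniformContinuous_of_continuous hf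

lemma B_main {δ κ : ℝ} (hδ : 0 < δ) (hδ1 : δ ≤ 1) (hκ : 0 < κ)
    {a : ℝ × ℝ → ℝ} (ham : Measurable a) (ha1 : ∀ q, δ ≤ a q) (ha2 : ∀ q, a q ≤ δ⁻¹)
    {r rt rx rxx g : ℝ × ℝ → ℝ} (hr : Continuous r) (hrt : Continuous rt) (hrxx : Continuous rxx)
    (dt : ∀ t x, HasDerivAt (fun s => r (s, x)) (rt (t, x)) t)
    (dx : ∀ t x, HasDerivAt (fun s => r (t, s)) (rx (t, x)) x)
    (dxx : ∀ t x, HasDerivAt (fun s => rx (t, s)) (rxx (t, x)) x)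
    {M R : ℝ} (hR : 0 ≤ R) (hgm : Measurable g)
    (hr0 : ∀ q, 0 ≤ r q) (hrM : ∀ q, r q ≤ M) (hg0 : ∀ q, 0 ≤ g q) (hgM : ∀ q, g q ≤ M)
    (sr : ∀ q, R < ‖q‖ → r q = 0) (srt : ∀ q, R < ‖q‖ → rt q = 0)
    (srxx : ∀ q, R < ‖q‖ → rxx q = 0) (sg : ∀ q, R < ‖q‖ → g q = 0)
    (hsub : ∀ q : ℝ × ℝ, 0 < q.1 → - g q ≤ rt q + a q * rxx q - κ * r q) :
    κ ^ 2 * ∫ q in {q : ℝ × ℝ | 0 < q.1}, r q ^ 2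
      ≤ (4 / δ ^ 2 + 4) * (4 * ∫ q in {q : ℝ × ℝ | 0 < q.1}, g q ^ 2) := by
  set P : Set (ℝ × ℝ) := {q : ℝ × ℝ | 0 < q.1} with hP
  have Pm : MeasurableSet P := measurableSet_lt measurable_const measurable_fst
  set S : Set (ℝ × ℝ) := Metric.closedBall (0 : ℝ × ℝ) (R + 1) with hS
  have Sm : MeasurableSet S := Metric.isClosed_closedBall.measurableSet
  have hM : 0 ≤ M := (hr0 0).trans (hrM 0)
  have gL : MemLp g 2 := A_memLp_bdd hgm (C := M) (R := R)
    (fun q => by rw [abs_of_nonneg (hg0 q)]; exact hgM q) sg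
  have key : ∀ η : ℝ, 0 < η → κ ^ 2 * ∫ q in P, r q ^ 2 ≤ (4 / δ ^ 2 + 4) *
      (4 * (∫ q in P, g q ^ 2) + 4 * (η ^ 2 * (2 * (R + 1)) ^ 2)) := by
    intro η hη
    set ε : ℝ := η / (1 + δ⁻¹) with hε
    have hεp : 0 < ε := by positivity
    obtain ⟨e1, e1p, he1⟩ := Metric.uniformContinuous_iff.1 (B_unif hrt srt) ε hεp
    obtain ⟨e2, e2p, he2⟩ := Metric.uniformContinuous_iff.1 (B_unif hrxx srxx) ε hεp
    set h : ℝ := min 1 (min e1 e2 / 2) with hh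
    have hp : 0 < h := by positivity
    have h1 : h ≤ 1 := min_le_left _ _
    have hlt : h < min e1 e2 := (min_le_right _ _).trans_lt (half_lt_self (by positivity))
    have hle1 : h < e1 := hlt.trans_le (min_le_left _ _)
    have hle2 : h < e2 := hlt.trans_le (min_le_right _ _)
    have cons1 : ∀ q : ℝ × ℝ, |(r (q + (h, 0)) - r q) / h - rt q| ≤ ε := by
      rintro ⟨t, x⟩
      obtain ⟨c, hc, e⟩ := B_mvt1 (f := fun s => r (s, x)) (f' := fun s => rt (s, x))
        (fun s => dt s x) t hp
      have : (t, x) + (h, 0) = (t + h, x) := by simp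
      rw [this, e, ← Real.dist_eq]
      apply le_of_lt
      apply he1
      rw [Prod.dist_eq]; simp [Real.dist_eq, e1p]; linarith
    have cons2 : ∀ q : ℝ × ℝ,
        |(r (q + (0, h)) - 2 * r q + r (q - (0, h))) / h ^ 2 - rxx q| ≤ ε := by
      rintro ⟨t, x⟩
      obtain ⟨c, hc, e⟩ := B_mvt2 (f := fun s => r (t, s)) (f' := fun s => rx (t, s))
        (f'' := fun s => rxx (t, s)) (fun s => dx t s) (fun s => dxx t s) x hp
      have t1 : (t, x) + (0, h) = (t, x + h) := by simp
      have t2 : (t, x) - (0, h) = (t, x - h) := by simp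
      rw [t1, t2, e, ← Real.dist_eq]
      apply le_of_lt
      apply he2
      rw [Prod.dist_eq]; simp [Real.dist_eq, e2p]; linarith
    set ρ : ℝ × ℝ → ℝ := P.indicator r with hρ
    set G : ℝ × ℝ → ℝ := P.indicator (fun q => g q + S.indicator (fun _ => η) q) with hG
    have hSη : ∀ q, 0 ≤ S.indicator (fun _ => η) q := fun q =>
      Set.indicator_nonneg (fun _ _ => hη.le) q
    have hSη' : ∀ q, S.indicator (fun _ => η) q ≤ η := fun q =>
      Set.indicator_le_self' (fun _ _ => hη.le) q
    have ρ0 : ∀ q, 0 ≤ ρ q := fun q => Set.indicator_nonneg (fun _ _ => hr0 _) q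
    have ρle : ∀ q, ρ q ≤ r q := fun q => Set.indicator_le_self' (fun _ _ => hr0 _) q
    have G0 : ∀ q, 0 ≤ G q := fun q =>
      Set.indicator_nonneg (fun _ _ => add_nonneg (hg0 _) (hSη _)) q
    have hsub' : ∀ q, - G q ≤ (ρ (q + (h, 0)) - ρ q) / h
      + a q * ((ρ (q + (0, h)) - 2 * ρ q + ρ (q - (0, h))) / h ^ 2) - κ * ρ q := by
      intro q
      by_cases hq : q ∈ P
      · have q1 : q + (h, 0) ∈ P := by
          simp only [hP, Set.mem_ofPred_eq, Prod.fst_add] at hq ⊢; linarith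
        have q2 : q + (0, h) ∈ P := by
          simp only [hP, Set.mem_ofPred_eq, Prod.fst_add] at hq ⊢; linarith
        have q3 : q - (0, h) ∈ P := by
          simp only [hP, Set.mem_ofPred_eq, Prod.fst_sub] at hq ⊢; linarith
        simp only [hρ, hG, Set.indicator_of_mem hq, Set.indicator_of_mem q1,
          Set.indicator_of_mem q2, Set.indicator_of_mem q3]
        by_cases hqS : q ∈ S
        · simp only [Set.indicator_of_mem hqS]
          have c1 := abs_le.1 (cons1 q)
          have c2 := abs_le.1 (cons2 q)
          have c3 := hsub q hq
          have hap : 0 < a q := hδ.trans_le (ha1 q)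
          have c4 : a q * (rxx q - ε) ≤
              a q * ((r (q + (0, h)) - 2 * r q + r (q - (0, h))) / h ^ 2) :=
            mul_le_mul_of_nonneg_left (by linarith [c2.1]) hap.le
          have c5 : a q * ε ≤ δ⁻¹ * ε := mul_le_mul_of_nonneg_right (ha2 q) hεp.le
          have c6 : ε * (1 + δ⁻¹) = η := by rw [hε]; field_simp
          nlinarith [c1.1]
        · have hn : R + 1 < ‖q‖ := by simpa [hS] using hqS
          have hz : ∀ p : ℝ × ℝ, ‖p‖ ≤ h → r (q + p) = 0 := by
            intro p hp
            apply sr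
            have := norm_sub_le (q + p) p
            rw [add_sub_cancel_right] at this
            linarith
          have z1 := hz (h, 0) (by simp [Prod.norm_def, abs_of_pos hp, hp.le])
          have z2 := hz (0, h) (by simp [Prod.norm_def, abs_of_pos hp, hp.le])
          have z3 := hz (-(0, h)) (by simp [Prod.norm_def, abs_of_pos hp, hp.le])
          rw [← sub_eq_add_neg] at z3
          rw [z1, z2, z3, sr q (by linarith), sg q (by linarith), Set.indicator_of_notMem hqS]
          simp
      · have q2 : q + (0, h) ∉ P := by
          simp only [hP, Set.mem_ofPred_eq, Prod.fst_add, not_lt] at hq ⊢; linarith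
        have q3 : q - (0, h) ∉ P := by
          simp only [hP, Set.mem_ofPred_eq, Prod.fst_sub, not_lt] at hq ⊢; linarith
        have e0 : ρ q = 0 := Set.indicator_of_notMem hq _
        have e2 : ρ (q + (0, h)) = 0 := Set.indicator_of_notMem q2 _
        have e3 : ρ (q - (0, h)) = 0 := Set.indicator_of_notMem q3 _
        have e4 : G q = 0 := Set.indicator_of_notMem hq _
        rw [e0, e2, e3, e4]
        have := ρ0 (q + (h, 0))
        simp; positivity
    have ρm : Measurable ρ := hr.measurable.indicator Pm
    have Gm : Measurable G := (hgm.add (measurable_const.indicator Sm)).indicator Pm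
    have Gs : ∀ q, R + 1 < ‖q‖ → G q = 0 := by
      intro q hq
      have : q ∉ S := by simpa [hS] using hq
      have e : g q + S.indicator (fun _ => η) q = 0 := by
        rw [sg q (by linarith), Set.indicator_of_notMem this]; simp
      by_cases hqP : q ∈ P
      · simp only [hG, Set.indicator_of_mem hqP]; exact e
      · exact Set.indicator_of_notMem hqP _
    have GM : ∀ q, G q ≤ M + η := fun q =>
      (Set.indicator_le_self' (fun _ _ => add_nonneg (hg0 _) (hSη _)) q).trans
        (add_le_add (hgM q) (hSη' q))
    have main := A_discrete hδ hδ1 hκ hp hp ham ha1 ha2 ρm Gm (M := M + η) (R := R + 1)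
      (by linarith) ρ0 (fun q => by linarith [ρle q, hrM q]) G0 GM
      (fun q hq => le_antisymm ((ρle q).trans_eq (sr q (by linarith))) (ρ0 q)) Gs hsub'
    have eρ : ∫ q, ρ q ^ 2 = ∫ q in P, r q ^ 2 := by
      rw [← integral_indicator Pm]
      congr 1; ext q; simp only [hρ, Set.indicator]; split_ifs <;> simp
    have GLp : MemLp G 2 := A_memLp_bdd Gm (C := M + η)
      (fun q => by rw [abs_of_nonneg (G0 q)]; exact GM q) Gs
    have eG : ∫ q, G q ^ 2 ≤ 2 * (∫ q in P, g q ^ 2) + 2 * (η ^ 2 * (2 * (R + 1)) ^ 2) := by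
      have i1 : Integrable (P.indicator fun q => g q ^ 2) := gL.integrable_sq.indicator Pm
      have sm : Measurable (S.indicator (fun _ => η)) := measurable_const.indicator Sm
      have sb : ∀ q, |S.indicator (fun _ => η) q| ≤ η := fun q => by
        rw [abs_of_nonneg (hSη q)]; exact hSη' q
      have ss : ∀ q, R + 1 < ‖q‖ → S.indicator (fun _ => η) q = 0 := fun q hq =>
        Set.indicator_of_notMem (by simpa [hS] using hq) _
      have sL : MemLp (S.indicator (fun _ => η)) 2 := A_memLp_bdd sm sb ss
      have b2 := A_int_bdd sm (by linarith) sb ss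
      have : ∫ q, G q ^ 2 ≤ ∫ q, (2 * P.indicator (fun q => g q ^ 2) q
          + 2 * (S.indicator (fun _ => η) q) ^ 2) := by
        apply integral_mono GLp.integrable_sq
          (I_add (i1.const_mul 2) (sL.integrable_sq.const_mul 2))
        intro q
        by_cases hq : q ∈ P
        · simp only [hG, Set.indicator_of_mem hq]
          nlinarith [sq_nonneg (g q - S.indicator (fun _ => η) q)]
        · simp only [hG, Set.indicator_of_notMem hq]
          have := sq_nonneg (S.indicator (fun _ => η) q)
          linarith
      rw [integral_add (i1.const_mul 2) (sL.integrable_sq.const_mul 2), integral_const_mul,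
        integral_const_mul, integral_indicator Pm] at this
      linarith
    rw [eρ] at main
    refine main.trans ?_
    apply mul_le_mul_of_nonneg_left _ (by positivity)
    linarith
  have lim : Filter.Tendsto (fun n : ℕ => (4 / δ ^ 2 + 4) *
      (4 * (∫ q in P, g q ^ 2) + 4 * ((1 / ((n : ℝ) + 1)) ^ 2 * (2 * (R + 1)) ^ 2))) Filter.atTop
      (nhds ((4 / δ ^ 2 + 4) * (4 * (∫ q in P, g q ^ 2) + 4 * (0 ^ 2 * (2 * (R + 1)) ^ 2)))) :=
    ((((tendsto_one_div_add_atTop_nhds_zero_nat.pow 2).mul_const _).const_mul 4).const_add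
      _).const_mul _
  have := ge_of_tendsto' lim (fun n => key _ (by positivity))
  simpa using this

end PartB

open MeasureTheory

section PartC

set_option maxHeartbeats 2000000 in
lemma C_pt {δ H lam ε a β γ A B At Bt Ax Bx Axx Bxx s f1 f2 : ℝ} (hδ : 0 < δ) (hδ1 : δ ≤ 1)
    (hlam : 0 ≤ lam) (hε : 0 < ε) (ha : δ ≤ a)
    (hell : ∀ y z : ℝ, δ * (y ^ 2 + H * z ^ 2) ≤ a * y ^ 2 + 2 * β * y * z + γ * z ^ 2)
    (hH : 0 ≤ H) (hs : s = Real.sqrt (A ^ 2 + B ^ 2 + ε ^ 2))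
    (e1 : f1 = At + a * Axx - 2 * β * Bx - (γ + lam) * A)
    (e2 : f2 = Bt + a * Bxx + 2 * β * Ax - (γ + lam) * B) :
    - Real.sqrt (f1 ^ 2 + f2 ^ 2) ≤ (A * At + B * Bt) / s
      + a * ((Ax ^ 2 + A * Axx + Bx ^ 2 + B * Bxx) / s - (A * Ax + B * Bx) ^ 2 / s ^ 3)
      - δ * (H + lam) * (s - ε) := by
  have hap : 0 < a := hδ.trans_le ha
  have sp : 0 < s := by rw [hs]; apply Real.sqrt_pos.2; positivity
  have s2 : s ^ 2 = A ^ 2 + B ^ 2 + ε ^ 2 := by rw [hs, Real.sq_sqrt]; positivity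
  have sε : ε ≤ s := by nlinarith [sq_nonneg A, sq_nonneg B]
  set n := A ^ 2 + B ^ 2 with hn
  have n0 : 0 ≤ n := by positivity
  set p := A * Ax + B * Bx with hp
  set q := A * Bx - B * Ax with hq
  have pq : n * (Ax ^ 2 + Bx ^ 2) = p ^ 2 + q ^ 2 := by simp only [hn, hp, hq]; ring
  have claim : δ * H * n ≤ a * (Ax ^ 2 + Bx ^ 2) - a * (p ^ 2 / s ^ 2) + 2 * β * q + γ * n := by
    rcases n0.eq_or_lt with h0 | h0
    · have : p ^ 2 + q ^ 2 = 0 := by rw [← pq, ← h0]; ring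
      have hp0 : p = 0 := by nlinarith [sq_nonneg p, sq_nonneg q]
      have hq0 : q = 0 := by nlinarith [sq_nonneg p, sq_nonneg q]
      rw [← h0, hp0, hq0]; simp; positivity
    · have h1 : p ^ 2 / s ^ 2 ≤ p ^ 2 / n := by
        apply div_le_div_of_nonneg_left (sq_nonneg _) h0
        rw [s2]; nlinarith [sq_nonneg ε]
      have h2 : Ax ^ 2 + Bx ^ 2 = p ^ 2 / n + q ^ 2 / n := by
        rw [← add_div, ← pq]; field_simp
      have h3 := hell (q / Real.sqrt n) (Real.sqrt n)
      have sn : 0 < Real.sqrt n := Real.sqrt_pos.2 h0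
      have h4 : (q / Real.sqrt n) ^ 2 = q ^ 2 / n := by rw [div_pow, Real.sq_sqrt n0]
      have h5 : 2 * β * (q / Real.sqrt n) * Real.sqrt n = 2 * β * q := by field_simp
      rw [h4, h5, Real.sq_sqrt n0] at h3
      have h6 : 0 ≤ q ^ 2 / n := by positivity
      have h7 : a * (p ^ 2 / s ^ 2) ≤ a * (p ^ 2 / n) := mul_le_mul_of_nonneg_left h1 hap.le
      rw [h2]
      have h8 : 0 ≤ δ * (q ^ 2 / n) := by positivity
      have h9 : a * (p ^ 2 / n + q ^ 2 / n) = a * (p ^ 2 / n) + a * (q ^ 2 / n) := by ring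
      have h10 : δ * (q ^ 2 / n + H * n) = δ * (q ^ 2 / n) + δ * H * n := by ring
      linarith
  have cs : -(s * Real.sqrt (f1 ^ 2 + f2 ^ 2)) ≤ A * f1 + B * f2 := by
    have h1 : (A * f1 + B * f2) ^ 2 ≤ (s * Real.sqrt (f1 ^ 2 + f2 ^ 2)) ^ 2 := by
      rw [mul_pow, Real.sq_sqrt (by positivity), s2]
      nlinarith [sq_nonneg (A * f2 - B * f1), mul_nonneg (sq_nonneg ε) (add_nonneg (sq_nonneg f1) (sq_nonneg f2))]
    exact (abs_le_of_sq_le_sq' h1 (by positivity)).1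
  have hmul : s * ((A * At + B * Bt) / s
      + a * ((Ax ^ 2 + A * Axx + Bx ^ 2 + B * Bxx) / s - p ^ 2 / s ^ 3)
      - δ * (H + lam) * (s - ε)) = A * f1 + B * f2 + (a * (Ax ^ 2 + Bx ^ 2) - a * (p ^ 2 / s ^ 2)
        + 2 * β * q + γ * n) + lam * n - δ * (H + lam) * (s * (s - ε)) := by
    rw [e1, e2]
    simp only [hn, hq]
    field_simp
    ring
  have hss : s * (s - ε) ≤ n := by nlinarith
  have hk : δ * (H + lam) * (s * (s - ε)) ≤ δ * (H + lam) * n :=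
    mul_le_mul_of_nonneg_left hss (by positivity)
  have hl : δ * lam * n ≤ lam * n := by
    have := mul_nonneg hlam n0
    nlinarith
  have fin : s * (- Real.sqrt (f1 ^ 2 + f2 ^ 2)) ≤ s * ((A * At + B * Bt) / s
      + a * ((Ax ^ 2 + A * Axx + Bx ^ 2 + B * Bxx) / s - p ^ 2 / s ^ 3)
      - δ * (H + lam) * (s - ε)) := by
    rw [hmul]
    have h1 : δ * (H + lam) * n = δ * H * n + δ * lam * n := by ring
    have h2 : s * (- Real.sqrt (f1 ^ 2 + f2 ^ 2)) = -(s * Real.sqrt (f1 ^ 2 + f2 ^ 2)) := by ring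
    linarith
  exact le_of_mul_le_mul_left fin sp

lemma C_bdd {f : ℝ × ℝ → ℝ} (hf : Continuous f) {R : ℝ} (hs : ∀ q, R < ‖q‖ → f q = 0) :
    ∃ C, ∀ q, |f q| ≤ C := by
  have : HasCompactSupport f := by
    apply HasCompactSupport.of_support_subset_isCompact (isCompact_closedBall (0 : ℝ × ℝ) R)
    intro q hq
    by_contra h
    exact hq (hs q (by simpa using h))
  exact this.exists_bound_of_continuous hf

lemma C_main {δ H lam : ℝ} (hδ : 0 < δ) (hδ1 : δ ≤ 1) (hlam : 0 < lam) (hH : 0 ≤ H)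
    {a β γ : ℝ × ℝ → ℝ} (ham : Measurable a) (ha1 : ∀ q, δ ≤ a q) (ha2 : ∀ q, a q ≤ δ⁻¹)
    (hell : ∀ q, ∀ y z : ℝ,
      δ * (y ^ 2 + H * z ^ 2) ≤ a q * y ^ 2 + 2 * β q * y * z + γ q * z ^ 2)
    {A At Ax Axx B Bt Bx Bxx f1 f2 : ℝ × ℝ → ℝ}
    (cA : Continuous A) (cAt : Continuous At) (cAx : Continuous Ax) (cAxx : Continuous Axx)
    (cB : Continuous B) (cBt : Continuous Bt) (cBx : Continuous Bx) (cBxx : Continuous Bxx)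
    (dAt : ∀ t x, HasDerivAt (fun s => A (s, x)) (At (t, x)) t)
    (dAx : ∀ t x, HasDerivAt (fun s => A (t, s)) (Ax (t, x)) x)
    (dAxx : ∀ t x, HasDerivAt (fun s => Ax (t, s)) (Axx (t, x)) x)
    (dBt : ∀ t x, HasDerivAt (fun s => B (s, x)) (Bt (t, x)) t)
    (dBx : ∀ t x, HasDerivAt (fun s => B (t, s)) (Bx (t, x)) x)
    (dBxx : ∀ t x, HasDerivAt (fun s => Bx (t, s)) (Bxx (t, x)) x)
    {R : ℝ} (hR : 0 ≤ R)
    (sA : ∀ q, R < ‖q‖ → A q = 0) (sAx : ∀ q, R < ‖q‖ → Ax q = 0)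
    (sB : ∀ q, R < ‖q‖ → B q = 0) (sBx : ∀ q, R < ‖q‖ → Bx q = 0)
    (m1 : Measurable f1) (m2 : Measurable f2)
    (s1 : ∀ q, R < ‖q‖ → f1 q = 0) (s2 : ∀ q, R < ‖q‖ → f2 q = 0)
    {M : ℝ} (hM : ∀ q, Real.sqrt (f1 q ^ 2 + f2 q ^ 2) ≤ M)
    (e1 : ∀ q, f1 q = At q + a q * Axx q - 2 * β q * Bx q - (γ q + lam) * A q)
    (e2 : ∀ q, f2 q = Bt q + a q * Bxx q + 2 * β q * Ax q - (γ q + lam) * B q) :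
    (δ * (H + lam)) ^ 2 * ∫ q in {q : ℝ × ℝ | 0 < q.1}, (A q ^ 2 + B q ^ 2)
      ≤ (4 / δ ^ 2 + 4) * (4 * ∫ q in {q : ℝ × ℝ | 0 < q.1}, (f1 q ^ 2 + f2 q ^ 2)) := by
  set P : Set (ℝ × ℝ) := {q : ℝ × ℝ | 0 < q.1} with hP
  have hκ : 0 < δ * (H + lam) := by positivity
  have key : ∀ ε : ℝ, 0 < ε → (δ * (H + lam)) ^ 2 *
      ∫ q in P, (Real.sqrt (A q ^ 2 + B q ^ 2 + ε ^ 2) - ε) ^ 2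
      ≤ (4 / δ ^ 2 + 4) * (4 * ∫ q in P, (f1 q ^ 2 + f2 q ^ 2)) := by
    intro ε hε
    set s : ℝ × ℝ → ℝ := fun q => Real.sqrt (A q ^ 2 + B q ^ 2 + ε ^ 2) with hs
    have arg : ∀ q, 0 < A q ^ 2 + B q ^ 2 + ε ^ 2 := fun q => by positivity
    have sp : ∀ q, 0 < s q := fun q => Real.sqrt_pos.2 (arg q)
    have sne : ∀ q, s q ≠ 0 := fun q => (sp q).ne'
    have ss : ∀ q, s q ^ 2 = A q ^ 2 + B q ^ 2 + ε ^ 2 := fun q => Real.sq_sqrt (arg q).le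
    have cs : Continuous s := by simp only [hs]; fun_prop
    have sε : ∀ q, ε ≤ s q := fun q => by
      have := ss q; have := sp q
      nlinarith [sq_nonneg (A q), sq_nonneg (B q)]
    -- derivative of s
    have ds : ∀ (f g : ℝ → ℝ) (f' g' y : ℝ), HasDerivAt f f' y → HasDerivAt g g' y →
        HasDerivAt (fun y => Real.sqrt (f y ^ 2 + g y ^ 2 + ε ^ 2))
          ((f y * f' + g y * g') / Real.sqrt (f y ^ 2 + g y ^ 2 + ε ^ 2)) y := by
      intro f g f' g' y hf hg
      have h0 : 0 < f y ^ 2 + g y ^ 2 + ε ^ 2 := by positivity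
      have h1 : HasDerivAt (fun y => f y ^ 2 + g y ^ 2 + ε ^ 2)
          (2 * f y * f' + 2 * g y * g') y := by
        have := ((hf.pow 2).add (hg.pow 2)).add_const (ε ^ 2)
        convert! this using 1
        simp
      convert h1.sqrt h0.ne' using 1
      have := (Real.sqrt_pos.2 h0).ne'
      field_simp
    obtain ⟨CA, hCA⟩ := C_bdd cA sA
    obtain ⟨CB, hCB⟩ := C_bdd cB sB
    have rle : ∀ q, s q - ε ≤ CA + CB := by
      intro q
      have hA := hCA q
      have hB := hCB q
      have : s q ≤ |A q| + |B q| + ε := by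
        apply Real.sqrt_le_iff.2 ⟨by positivity, ?_⟩
        rw [← sq_abs (A q), ← sq_abs (B q)]
        have := abs_nonneg (A q)
        have := abs_nonneg (B q)
        nlinarith [mul_nonneg (abs_nonneg (A q)) (abs_nonneg (B q)),
          mul_nonneg (abs_nonneg (A q)) hε.le, mul_nonneg (abs_nonneg (B q)) hε.le]
      linarith
    have res := B_main (r := fun q => s q - ε)
      (rt := fun q => (A q * At q + B q * Bt q) / s q)
      (rx := fun q => (A q * Ax q + B q * Bx q) / s q)
      (rxx := fun q => (Ax q ^ 2 + A q * Axx q + Bx q ^ 2 + B q * Bxx q) / s q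
        - (A q * Ax q + B q * Bx q) ^ 2 / s q ^ 3)
      (g := fun q => Real.sqrt (f1 q ^ 2 + f2 q ^ 2))
      (M := max M (CA + CB)) hδ hδ1 hκ ham ha1 ha2 (by fun_prop)
      (by apply Continuous.div _ cs sne; fun_prop)
      (by
        apply Continuous.sub
        · apply Continuous.div _ cs sne; fun_prop
        · apply Continuous.div _ (cs.pow 3) (fun q => pow_ne_zero 3 (sne q)); fun_prop)
      (fun t x => (ds _ _ _ _ _ (dAt t x) (dBt t x)).sub_const ε)
      (fun t x => (ds _ _ _ _ _ (dAx t x) (dBx t x)).sub_const ε)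
      (by
        intro t x
        have h1 := ds _ _ _ _ _ (dAx t x) (dBx t x)
        have h2 := ((dAx t x).mul (dAxx t x)).add ((dBx t x).mul (dBxx t x))
        convert! h2.div h1 (sne (t, x)) using 1
        change _ = (_ * s (t, x) - _ * (_ / s (t, x))) / s (t, x) ^ 2
        have := sne (t, x)
        simp only [Pi.add_apply, Pi.mul_apply]
        field_simp
        ring)
      hR (by fun_prop) (fun q => sub_nonneg.2 (sε q))
      (fun q => (rle q).trans (le_max_right _ _)) (fun q => Real.sqrt_nonneg _)
      (fun q => (hM q).trans (le_max_left _ _))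
      (fun q hq => by simp [hs, sA q hq, sB q hq, Real.sqrt_sq hε.le])
      (fun q hq => by simp [sA q hq, sB q hq])
      (fun q hq => by simp [sA q hq, sB q hq, sAx q hq, sBx q hq])
      (fun q hq => by simp [s1 q hq, s2 q hq])
      (fun q _ => C_pt hδ hδ1 hlam.le hε (ha1 q) (hell q) hH rfl (e1 q) (e2 q))
    have e : ∀ q, Real.sqrt (f1 q ^ 2 + f2 q ^ 2) ^ 2 = f1 q ^ 2 + f2 q ^ 2 := fun q =>
      Real.sq_sqrt (by positivity)
    simp only [e] at res
    exact res
  have lA : MemLp A 2 := by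
    obtain ⟨C, hC⟩ := C_bdd cA sA
    exact A_memLp_bdd cA.measurable hC sA
  have lB : MemLp B 2 := by
    obtain ⟨C, hC⟩ := C_bdd cB sB
    exact A_memLp_bdd cB.measurable hC sB
  have lim : Filter.Tendsto (fun n : ℕ => ∫ q in P,
      (Real.sqrt (A q ^ 2 + B q ^ 2 + (1 / ((n : ℝ) + 1)) ^ 2) - 1 / ((n : ℝ) + 1)) ^ 2)
      Filter.atTop (nhds (∫ q in P, (A q ^ 2 + B q ^ 2))) := by
    apply tendsto_integral_of_dominated_convergence (fun q => A q ^ 2 + B q ^ 2)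
    · intro n
      apply Continuous.aestronglyMeasurable
      fun_prop
    · exact (I_add lA.integrable_sq lB.integrable_sq).restrict
    · intro n
      refine Filter.Eventually.of_forall fun q => ?_
      set ε : ℝ := 1 / ((n : ℝ) + 1)
      have hε : 0 < ε := by positivity
      have h1 : 0 ≤ A q ^ 2 + B q ^ 2 + ε ^ 2 := by positivity
      have h2 := Real.sq_sqrt h1
      have h3 : ε ≤ Real.sqrt (A q ^ 2 + B q ^ 2 + ε ^ 2) := by
        apply Real.le_sqrt_of_sq_le
        nlinarith [sq_nonneg (A q), sq_nonneg (B q)]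
      rw [Real.norm_eq_abs, abs_of_nonneg (sq_nonneg _)]
      nlinarith
    · refine Filter.Eventually.of_forall fun q => ?_
      have t := tendsto_one_div_add_atTop_nhds_zero_nat (𝕜 := ℝ)
      have c : Continuous fun ε : ℝ => (Real.sqrt (A q ^ 2 + B q ^ 2 + ε ^ 2) - ε) ^ 2 := by
        fun_prop
      have := (c.tendsto 0).comp t
      convert! this using 2
      rw [sub_zero, Real.sq_sqrt (by positivity)]; ring
  exact le_of_tendsto' (lim.const_mul _) (fun n => key _ (by positivity))

end PartC

open MeasureTheory

section PartE

/-- Smooth with compact support. -/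
def CSF {V : Type*} [NormedAddCommGroup V] [NormedSpace ℝ V] (f : V → ℝ) : Prop :=
  ContDiff ℝ (⊤ : ℕ∞) f ∧ HasCompactSupport f

/-- Directional derivative. -/
noncomputable def DD {V : Type*} [NormedAddCommGroup V] [NormedSpace ℝ V] (v : V) (f : V → ℝ) : V → ℝ :=
  fun z => fderiv ℝ f z v

variable {V : Type*} [NormedAddCommGroup V] [NormedSpace ℝ V]

lemma CSF.cont {f : V → ℝ} (h : CSF f) : Continuous f := h.1.continuous

lemma CSF.diff {f : V → ℝ} (h : CSF f) : Differentiable ℝ f := h.1.differentiable (by simp)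

lemma CSF.dd {f : V → ℝ} (h : CSF f) (v : V) : CSF (DD v f) := by
  constructor
  · have := h.1.fderiv_right (m := (⊤ : ℕ∞)) (by simp)
    exact this.clm_apply contDiff_const
  · exact h.2.fderiv_apply ℝ v

lemma CSF.add {f g : V → ℝ} (h : CSF f) (h' : CSF g) : CSF (fun z => f z + g z) :=
  ⟨h.1.add h'.1, h.2.add h'.2⟩

lemma CSF.mul_left {f g : V → ℝ} (h : CSF f) (h' : ContDiff ℝ (⊤ : ℕ∞) g) : CSF (fun z => g z * f z) :=
  ⟨h'.mul h.1, h.2.mul_left⟩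

lemma CSF.cmul {f : V → ℝ} (h : CSF f) (c : ℝ) : CSF (fun z => c * f z) :=
  h.mul_left contDiff_const

lemma CSF.sub {f g : V → ℝ} (h : CSF f) (h' : CSF g) : CSF (fun z => f z - g z) := by
  have := h.add (h'.cmul (-1))
  convert this using 2
  ring

lemma CSF.zero : CSF (fun _ : V => (0 : ℝ)) := ⟨contDiff_const, HasCompactSupport.zero⟩

lemma CSF.sum {ι : Type*} (s : Finset ι) {f : ι → V → ℝ} (h : ∀ i, CSF (f i)) :
    CSF (fun z => ∑ i ∈ s, f i z) := by
  classical
  induction s using Finset.induction_on with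
  | empty => simpa using CSF.zero
  | insert i s hi ih => simpa [Finset.sum_insert hi] using (h i).add ih

lemma CSF.bd {f : V → ℝ} (h : CSF f) : ∃ C, 0 ≤ C ∧ ∀ z, |f z| ≤ C := by
  obtain ⟨C, hC⟩ := h.2.exists_bound_of_continuous h.cont
  exact ⟨C, (norm_nonneg _).trans (hC 0), hC⟩

lemma CSF.supp {f : V → ℝ} (h : CSF f) : ∃ R, 0 ≤ R ∧ ∀ z, R < ‖z‖ → f z = 0 := by
  obtain ⟨R, hR, hs⟩ := h.2.isCompact.isBounded.subset_closedBall_lt 0 0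
  refine ⟨R, hR.le, fun z hz => ?_⟩
  by_contra hne
  have := hs (subset_tsupport f hne)
  simp at this
  linarith

lemma DD_supp {f : V → ℝ} {R : ℝ} (h : ∀ z, R < ‖z‖ → f z = 0) (v : V) :
    ∀ z, R < ‖z‖ → DD v f z = 0 := by
  intro z hz
  have : f =ᶠ[nhds z] fun _ => 0 := by
    filter_upwards [(isOpen_lt continuous_const continuous_norm).mem_nhds hz] with y hy
    exact h y hy
  simp [DD, this.fderiv_eq]

lemma DD_comm {f : V → ℝ} (h : CSF f) (v w : V) : DD v (DD w f) = DD w (DD v f) := by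
  funext z
  have h2 : ContDiff ℝ 2 f := contDiff_infty.1 h.1 2
  have hd : DifferentiableAt ℝ (fderiv ℝ f) z :=
    ((h2.fderiv_right (m := 1) (by norm_num)).differentiable (by simp)) z
  have key : ∀ v w : V, DD v (DD w f) z = fderiv ℝ (fderiv ℝ f) z v w := by
    intro v w
    have := (hd.hasFDerivAt.clm_apply (hasFDerivAt_const w z)).fderiv
    change fderiv ℝ (fun y => (fderiv ℝ f y) w) z v = _
    rw [this]
    simp
  rw [key, key]
  have hs : IsSymmSndFDerivAt ℝ f z := by
    apply ContDiffAt.isSymmSndFDerivAt (n := 2) h2.contDiffAt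
    simp [minSmoothness_of_isRCLikeNormedField]
  exact hs.eq v w

lemma DD_comp_lin {V' : Type*} [NormedAddCommGroup V'] [NormedSpace ℝ V'] (L : V' →L[ℝ] V)
    {f : V → ℝ} (h : CSF f) (v : V') : DD v (fun z => f (L z)) = fun z => DD (L v) f (L z) := by
  funext z
  have h1 := (h.diff (L z)).hasFDerivAt.comp z L.hasFDerivAt
  have := h1.fderiv
  simp only [DD]
  change fderiv ℝ (f ∘ L) z v = _
  rw [this]; rfl

-- slices
variable {Q E : Type*} [NormedAddCommGroup Q] [NormedSpace ℝ Q] [NormedAddCommGroup E] [NormedSpace ℝ E]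

lemma CSF.slice [FiniteDimensional ℝ E] {G : Q × E → ℝ} (h : CSF G) (q : Q) : CSF (fun y => G (q, y)) := by
  constructor
  · exact h.1.comp (contDiff_const.prodMk contDiff_id)
  · obtain ⟨R, hR, hs⟩ := h.supp
    have := FiniteDimensional.proper ℝ E
    apply HasCompactSupport.of_support_subset_isCompact (isCompact_closedBall (0 : E) R)
    intro y hy
    by_contra hn
    apply hy
    apply hs
    simp only [Metric.mem_closedBall, dist_zero_right, not_le] at hn
    exact hn.trans_le (norm_snd_le (q, y))

lemma DD_slice {G : Q × E → ℝ} (h : CSF G) (q : Q) (e : E) (y : E) :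
    fderiv ℝ (fun y => G (q, y)) y e = DD ((0 : Q), e) G (q, y) := by
  have h1 := (h.diff (q, y)).hasFDerivAt.comp y ((hasFDerivAt_const q y).prodMk (hasFDerivAt_id y))
  have := h1.fderiv
  change fderiv ℝ (G ∘ fun y => (q, y)) y e = _
  rw [this]
  simp [DD]

lemma DD_path {G : Q × E → ℝ} (h : CSF G) {p : ℝ → Q} {v : Q} {t : ℝ} (hp : HasDerivAt p v t) (y : E) :
    HasDerivAt (fun s => G (p s, y)) (DD (v, (0 : E)) G (p t, y)) t := by
  exact (h.diff (p t, y)).hasFDerivAt.comp_hasDerivAt t (hp.prodMk (hasDerivAt_const t y))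

variable [MeasurableSpace E] [BorelSpace E] [FiniteDimensional ℝ E] {μ : Measure E} [μ.IsAddHaarMeasure]

lemma W_int {G : Q × E → ℝ} (h : CSF G) {w : E → ℝ} (hw : Continuous w) (q : Q) :
    Integrable (fun y => w y * G (q, y)) μ := by
  have := h.slice q
  exact (hw.mul this.cont).integrable_of_hasCompactSupport (this.2.mul_left)

lemma W_cont [FiniteDimensional ℝ Q] {G : Q × E → ℝ} (h : CSF G) {X : Type*} [TopologicalSpace X] [FirstCountableTopology X]
    [LocallyCompactSpace X] {w : X × E → ℝ} (hw : Continuous w) {p : X → Q} (hp : Continuous p) :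
    Continuous (fun x => ∫ y, w (x, y) * G (p x, y) ∂μ) := by
  obtain ⟨R, hR, hs⟩ := h.supp
  have := FiniteDimensional.proper ℝ E
  have hc := continuous_parametric_integral_of_continuous (μ := μ)
    (f := fun x y => w (x, y) * G (p x, y))
    (by
      have := h.cont
      simp only [Function.uncurry_def]
      fun_prop) (isCompact_closedBall (0 : E) R)
  convert hc using 2 with x
  symm
  apply setIntegral_eq_integral_of_forall_compl_eq_zero
  intro y hy
  simp only [Metric.mem_closedBall, dist_zero_right, not_le] at hy
  rw [hs _ (hy.trans_le (norm_snd_le (p x, y))), mul_zero]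

lemma W_deriv {G : Q × E → ℝ} (h : CSF G) {w : E → ℝ} (hw : Continuous w) {p : ℝ → Q} {v : Q}
    (hp : ∀ t, HasDerivAt p v t) (t : ℝ) :
    HasDerivAt (fun s => ∫ y, w y * G (p s, y) ∂μ) (∫ y, w y * DD (v, (0 : E)) G (p t, y) ∂μ) t := by
  have h' := h.dd (v, (0 : E))
  obtain ⟨R, hR, hs⟩ := h'.supp
  obtain ⟨C, hC, hb⟩ := h'.bd
  have := FiniteDimensional.proper ℝ E
  refine (hasDerivAt_integral_of_dominated_loc_of_deriv_le (s := Set.univ) (μ := μ) (𝕜 := ℝ)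
    (F := fun s y => w y * G (p s, y)) (F' := fun s y => w y * DD (v, (0 : E)) G (p s, y))
    (bound := (Metric.closedBall (0 : E) R).indicator fun y => |w y| * C)
    Filter.univ_mem ?_ (W_int h hw _) (W_int h' hw _).aestronglyMeasurable ?_ ?_ ?_).2
  · exact Filter.Eventually.of_forall fun s => (W_int h hw _).aestronglyMeasurable
  · refine Filter.Eventually.of_forall fun y s _ => ?_
    by_cases hy : y ∈ Metric.closedBall (0 : E) R
    · rw [Set.indicator_of_mem hy, norm_mul]
      exact mul_le_mul_of_nonneg_left (hb _) (norm_nonneg _)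
    · rw [Set.indicator_of_notMem hy]
      simp only [Metric.mem_closedBall, dist_zero_right, not_le] at hy
      rw [hs _ (hy.trans_le (norm_snd_le (p s, y)))]
      simp
  · rw [integrable_indicator_iff Metric.isClosed_closedBall.measurableSet]
    apply ContinuousOn.integrableOn_compact (isCompact_closedBall _ _)
    fun_prop
  · refine Filter.Eventually.of_forall fun y s _ => ?_
    exact (DD_path h (hp s) y).const_mul _

lemma W_ibp {G : Q × E → ℝ} (h : CSF G) {w : E → ℝ} (hw : ContDiff ℝ (⊤ : ℕ∞) w) (q : Q) (e : E) :
    ∫ y, w y * DD ((0 : Q), e) G (q, y) ∂μ = - ∫ y, fderiv ℝ w y e * G (q, y) ∂μ := by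
  have hw' : Continuous fun y => fderiv ℝ w y e := by
    have := hw.continuous_fderiv (by simp)
    fun_prop
  have := integral_mul_fderiv_eq_neg_fderiv_mul_of_integrable (μ := μ) (f := w) (g := fun y => G (q, y))
    (v := e) (W_int h hw' q)
    (by
      simp only [DD_slice h q e]
      exact W_int (h.dd _) hw.continuous q) (W_int h hw.continuous q)
    (fun y _ => hw.differentiable (by simp) y) (fun y _ => (h.slice q).diff y)
  simp only [DD_slice h q e] at this
  exact this

lemma W_supp {G : Q × E → ℝ} {R : ℝ} (hs : ∀ z, R < ‖z‖ → G z = 0) (w : E → ℝ) (q : Q) (hq : R < ‖q‖) :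
    ∫ y, w y * G (q, y) ∂μ = 0 := by
  have : ∀ y, w y * G (q, y) = 0 := fun y => by
    rw [hs _ (hq.trans_le (norm_fst_le (q, y))), mul_zero]
  simp [this]

end PartE

open MeasureTheory

section PartF

/-- Euclidean space. -/
abbrev EU (m : ℕ) : Type := EuclideanSpace ℝ (Fin m)

/-- cosine weight -/
noncomputable def wc {m : ℕ} (ξ y : EU m) : ℝ := Real.cos (2 * Real.pi * inner ℝ y ξ)
/-- minus sine weight -/
noncomputable def ws {m : ℕ} (ξ y : EU m) : ℝ := - Real.sin (2 * Real.pi * inner ℝ y ξ)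

lemma wc_cont {m : ℕ} : Continuous (fun z : EU m × EU m => wc z.1 z.2) := by unfold wc; fun_prop
lemma ws_cont {m : ℕ} : Continuous (fun z : EU m × EU m => ws z.1 z.2) := by unfold ws; fun_prop
lemma wc_smooth {m : ℕ} (ξ : EU m) : ContDiff ℝ (⊤ : ℕ∞) (wc ξ) := by
  have : ContDiff ℝ (⊤ : ℕ∞) (fun y : EU m => inner ℝ y ξ) := contDiff_id.inner ℝ contDiff_const
  unfold wc; fun_prop
lemma ws_smooth {m : ℕ} (ξ : EU m) : ContDiff ℝ (⊤ : ℕ∞) (ws ξ) := by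
  have : ContDiff ℝ (⊤ : ℕ∞) (fun y : EU m => inner ℝ y ξ) := contDiff_id.inner ℝ contDiff_const
  unfold ws; fun_prop

lemma inner_deriv {m : ℕ} (ξ y e : EU m) :
    HasFDerivAt (fun y : EU m => 2 * Real.pi * inner ℝ y ξ) ((2 * Real.pi) • (innerSL ℝ ξ)) y := by
  have : HasFDerivAt (fun y : EU m => inner ℝ ξ y) (innerSL ℝ ξ) y := (innerSL ℝ ξ).hasFDerivAt
  have e : (fun y : EU m => 2 * Real.pi * inner ℝ y ξ) = fun y => 2 * Real.pi * inner ℝ ξ y := by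
    funext y; rw [real_inner_comm]
  rw [e]
  exact this.const_mul _

lemma wc_deriv {m : ℕ} (ξ y e : EU m) :
    fderiv ℝ (wc ξ) y e = (2 * Real.pi * inner ℝ ξ e) * ws ξ y := by
  have := (inner_deriv ξ y e).cos.fderiv
  change fderiv ℝ (fun y => Real.cos (2 * Real.pi * inner ℝ y ξ)) y e = _
  rw [this]
  simp [ws]; ring

lemma ws_deriv {m : ℕ} (ξ y e : EU m) :
    fderiv ℝ (ws ξ) y e = -(2 * Real.pi * inner ℝ ξ e) * wc ξ y := by
  have := (inner_deriv ξ y e).sin.neg.fderiv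
  change fderiv ℝ (- fun y => Real.sin (2 * Real.pi * inner ℝ y ξ)) y e = _
  rw [this]
  simp [wc]; ring

lemma planch {m : ℕ} {g : EU m → ℝ} (h : CSF g) :
    ∫⁻ ξ, ENNReal.ofReal ((∫ y, wc ξ y * g y) ^ 2 + (∫ y, ws ξ y * g y) ^ 2)
      = ∫⁻ y, ENNReal.ofReal (g y ^ 2) := by
  have hc : HasCompactSupport (fun y => (g y : ℂ)) := h.2.comp_left (g := fun x : ℝ => (x : ℂ)) (by simp)
  have hs : ContDiff ℝ (⊤ : ℕ∞) (fun y => (g y : ℂ)) := Complex.ofRealCLM.contDiff.comp h.1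
  let f := hc.toSchwartzMap hs
  have hf : ∀ y, f y = (g y : ℂ) := fun y => rfl
  have hF : ∀ ξ, ‖(FourierTransform.fourier f) ξ‖ ^ 2 = (∫ y, wc ξ y * g y) ^ 2 + (∫ y, ws ξ y * g y) ^ 2 := by
    intro ξ
    rw [SchwartzMap.fourier_coe, Real.fourier_eq']
    have i1 : Integrable (fun y => wc ξ y * g y) :=
      ((wc_smooth ξ).continuous.mul h.cont).integrable_of_hasCompactSupport h.2.mul_left
    have i2 : Integrable (fun y => ws ξ y * g y) :=
      ((ws_smooth ξ).continuous.mul h.cont).integrable_of_hasCompactSupport h.2.mul_left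
    have e : ∀ y, Complex.exp (((-2 * Real.pi * inner ℝ y ξ : ℝ) : ℂ) * Complex.I) • f y
        = ((wc ξ y * g y : ℝ) : ℂ) + ((ws ξ y * g y : ℝ) : ℂ) * Complex.I := by
      intro y
      rw [hf, Complex.exp_mul_I, ← Complex.ofReal_cos, ← Complex.ofReal_sin]
      rw [show -2 * Real.pi * inner ℝ y ξ = -(2 * Real.pi * inner ℝ y ξ) by ring, Real.cos_neg, Real.sin_neg]
      simp only [wc, ws, smul_eq_mul]
      push_cast
      ring
    simp only [e]
    rw [integral_add i1.ofReal (i2.ofReal.mul_const _), integral_mul_const, integral_complex_ofReal, integral_complex_ofReal]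
    rw [Complex.sq_norm, Complex.normSq_add_mul_I]
  have main := SchwartzMap.integral_norm_sq_fourier f
  simp only [hF] at main
  have r1 : ∀ y, ‖f y‖ ^ 2 = g y ^ 2 := fun y => by simp [hf]
  simp only [r1] at main
  have j1 : Integrable (fun ξ => (∫ y, wc ξ y * g y) ^ 2 + (∫ y, ws ξ y * g y) ^ 2) := by
    simp only [← hF]
    exact (SchwartzMap.memLp (FourierTransform.fourier f) 2).integrable_norm_pow (by simp)
  have j2 : Integrable (fun y => g y ^ 2) := by
    apply Continuous.integrable_of_hasCompactSupport
    · have := h.cont; fun_prop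
    · simp only [sq]; exact h.2.mul_left
  rw [← ofReal_integral_eq_lintegral_ofReal j1 (Filter.Eventually.of_forall fun ξ => by positivity),
    ← ofReal_integral_eq_lintegral_ofReal j2 (Filter.Eventually.of_forall fun ξ => by positivity), main]

end PartF

open MeasureTheory

section PartG

lemma C_main2 {δ H lam : ℝ} (hδ : 0 < δ) (hδ1 : δ ≤ 1) (hlam : 0 < lam) (hH : 0 ≤ H)
    {a β γ : ℝ × ℝ → ℝ} (ham : Measurable a) (ha1 : ∀ q, δ ≤ a q) (ha2 : ∀ q, a q ≤ δ⁻¹)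
    (hβm : Measurable β) (hγm : Measurable γ) {Cβ Cγ : ℝ} (hβ : ∀ q, |β q| ≤ Cβ) (hγ : ∀ q, |γ q| ≤ Cγ)
    (hell : ∀ q, ∀ y z : ℝ,
      δ * (y ^ 2 + H * z ^ 2) ≤ a q * y ^ 2 + 2 * β q * y * z + γ q * z ^ 2)
    {A At Ax Axx B Bt Bx Bxx : ℝ × ℝ → ℝ}
    (cA : Continuous A) (cAt : Continuous At) (cAx : Continuous Ax) (cAxx : Continuous Axx)
    (cB : Continuous B) (cBt : Continuous Bt) (cBx : Continuous Bx) (cBxx : Continuous Bxx)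
    (dAt : ∀ t x, HasDerivAt (fun s => A (s, x)) (At (t, x)) t)
    (dAx : ∀ t x, HasDerivAt (fun s => A (t, s)) (Ax (t, x)) x)
    (dAxx : ∀ t x, HasDerivAt (fun s => Ax (t, s)) (Axx (t, x)) x)
    (dBt : ∀ t x, HasDerivAt (fun s => B (s, x)) (Bt (t, x)) t)
    (dBx : ∀ t x, HasDerivAt (fun s => B (t, s)) (Bx (t, x)) x)
    (dBxx : ∀ t x, HasDerivAt (fun s => Bx (t, s)) (Bxx (t, x)) x)
    {R : ℝ} (hR : 0 ≤ R)
    (sA : ∀ q, R < ‖q‖ → A q = 0) (sAt : ∀ q, R < ‖q‖ → At q = 0)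
    (sAx : ∀ q, R < ‖q‖ → Ax q = 0) (sAxx : ∀ q, R < ‖q‖ → Axx q = 0)
    (sB : ∀ q, R < ‖q‖ → B q = 0) (sBt : ∀ q, R < ‖q‖ → Bt q = 0)
    (sBx : ∀ q, R < ‖q‖ → Bx q = 0) (sBxx : ∀ q, R < ‖q‖ → Bxx q = 0) :
    Integrable (fun q => (At q + a q * Axx q - 2 * β q * Bx q - (γ q + lam) * A q) ^ 2 +
       (Bt q + a q * Bxx q + 2 * β q * Ax q - (γ q + lam) * B q) ^ 2) ∧
    (δ * (H + lam)) ^ 2 * ∫ q in {q : ℝ × ℝ | 0 < q.1}, (A q ^ 2 + B q ^ 2)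
      ≤ (4 / δ ^ 2 + 4) * (4 * ∫ q in {q : ℝ × ℝ | 0 < q.1},
       ((At q + a q * Axx q - 2 * β q * Bx q - (γ q + lam) * A q) ^ 2 +
       (Bt q + a q * Bxx q + 2 * β q * Ax q - (γ q + lam) * B q) ^ 2)) := by
  obtain ⟨kA, hkA⟩ := C_bdd cA sA
  obtain ⟨kAt, hkAt⟩ := C_bdd cAt sAt
  obtain ⟨kAx, hkAx⟩ := C_bdd cAx sAx
  obtain ⟨kAxx, hkAxx⟩ := C_bdd cAxx sAxx
  obtain ⟨kB, hkB⟩ := C_bdd cB sB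
  obtain ⟨kBt, hkBt⟩ := C_bdd cBt sBt
  obtain ⟨kBx, hkBx⟩ := C_bdd cBx sBx
  obtain ⟨kBxx, hkBxx⟩ := C_bdd cBxx sBxx
  have ha : ∀ q, |a q| ≤ δ⁻¹ := fun q => by
    rw [abs_of_pos (hδ.trans_le (ha1 q))]; exact ha2 q
  have bmul : ∀ {x y X Y : ℝ}, |x| ≤ X → |y| ≤ Y → |x * y| ≤ X * Y := by
    intro x y X Y hx hy
    rw [abs_mul]; exact mul_le_mul hx hy (abs_nonneg _) ((abs_nonneg _).trans hx)
  have hgl : ∀ q, |γ q + lam| ≤ Cγ + lam := fun q => by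
    refine (abs_add_le _ _).trans ?_
    rw [abs_of_pos hlam]; linarith [hγ q]
  have h2b : ∀ q, |2 * β q| ≤ 2 * Cβ := fun q => bmul (by norm_num) (hβ q)
  have b1 : ∀ q, |At q + a q * Axx q - 2 * β q * Bx q - (γ q + lam) * A q| ≤
      kAt + δ⁻¹ * kAxx + 2 * Cβ * kBx + (Cγ + lam) * kA := fun q => by
    have h1 := bmul (ha q) (hkAxx q)
    have h2 := bmul (h2b q) (hkBx q)
    have h3 := bmul (hgl q) (hkA q)
    have h4 := hkAt q
    rw [abs_le] at *
    constructor <;> linarith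
  have b2 : ∀ q, |Bt q + a q * Bxx q + 2 * β q * Ax q - (γ q + lam) * B q| ≤
      kBt + δ⁻¹ * kBxx + 2 * Cβ * kAx + (Cγ + lam) * kB := fun q => by
    have h1 := bmul (ha q) (hkBxx q)
    have h2 := bmul (h2b q) (hkAx q)
    have h3 := bmul (hgl q) (hkB q)
    have h4 := hkBt q
    rw [abs_le] at *
    constructor <;> linarith
  have m1 : Measurable (fun q => At q + a q * Axx q - 2 * β q * Bx q - (γ q + lam) * A q) := by
    have := cA.measurable; have := cAt.measurable; have := cAxx.measurable; have := cBx.measurable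
    fun_prop
  have m2 : Measurable (fun q => Bt q + a q * Bxx q + 2 * β q * Ax q - (γ q + lam) * B q) := by
    have := cB.measurable; have := cBt.measurable; have := cBxx.measurable; have := cAx.measurable
    fun_prop
  have s1 : ∀ q, R < ‖q‖ → At q + a q * Axx q - 2 * β q * Bx q - (γ q + lam) * A q = 0 := by
    intro q hq
    rw [sAt q hq, sAxx q hq, sBx q hq, sA q hq]; ring
  have s2 : ∀ q, R < ‖q‖ → Bt q + a q * Bxx q + 2 * β q * Ax q - (γ q + lam) * B q = 0 := by
    intro q hq
    rw [sBt q hq, sBxx q hq, sAx q hq, sB q hq]; ring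
  constructor
  · exact I_add (A_memLp_bdd m1 b1 s1).integrable_sq (A_memLp_bdd m2 b2 s2).integrable_sq
  · refine C_main hδ hδ1 hlam hH ham ha1 ha2 hell cA cAt cAx cAxx cB cBt cBx cBxx dAt dAx dAxx dBt dBx dBxx
      hR sA sAx sB sBx m1 m2 s1 s2 (M := (kAt + δ⁻¹ * kAxx + 2 * Cβ * kBx + (Cγ + lam) * kA) +
        (kBt + δ⁻¹ * kBxx + 2 * Cβ * kAx + (Cγ + lam) * kB)) ?_ (fun q => rfl) (fun q => rfl)
    intro q
    set f := At q + a q * Axx q - 2 * β q * Bx q - (γ q + lam) * A q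
    set g := Bt q + a q * Bxx q + 2 * β q * Ax q - (γ q + lam) * B q
    have h1 : Real.sqrt (f ^ 2 + g ^ 2) ≤ |f| + |g| := by
      apply Real.sqrt_le_iff.2 ⟨by positivity, ?_⟩
      rw [← sq_abs f, ← sq_abs g]
      nlinarith [mul_nonneg (abs_nonneg f) (abs_nonneg g)]
    linarith [b1 q, b2 q]

/-- Weighted slice integral. -/
noncomputable def WI {m : ℕ} (w : EU m → ℝ) (G : (ℝ × ℝ) × EU m → ℝ) (q : ℝ × ℝ) : ℝ :=
  ∫ y, w y * G (q, y)

lemma WI_add {m : ℕ} {w : EU m → ℝ} (hw : Continuous w) {G G' : (ℝ × ℝ) × EU m → ℝ} (h : CSF G) (h' : CSF G')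
    (q : ℝ × ℝ) : WI w (fun z => G z + G' z) q = WI w G q + WI w G' q := by
  simp only [WI, mul_add]
  exact integral_add (W_int h hw q) (W_int h' hw q)

lemma WI_sub {m : ℕ} {w : EU m → ℝ} (hw : Continuous w) {G G' : (ℝ × ℝ) × EU m → ℝ} (h : CSF G) (h' : CSF G')
    (q : ℝ × ℝ) : WI w (fun z => G z - G' z) q = WI w G q - WI w G' q := by
  simp only [WI, mul_sub]
  exact integral_sub (W_int h hw q) (W_int h' hw q)

lemma WI_cmul {m : ℕ} (w : EU m → ℝ) (c : ℝ) (G : (ℝ × ℝ) × EU m → ℝ)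
    (q : ℝ × ℝ) : WI w (fun z => c * G z) q = c * WI w G q := by
  simp only [WI, mul_left_comm _ c]
  exact integral_const_mul _ _

lemma WI_sum {m : ℕ} {w : EU m → ℝ} (hw : Continuous w) {ι : Type*} (s : Finset ι)
    {G : ι → (ℝ × ℝ) × EU m → ℝ} (h : ∀ i, CSF (G i))
    (q : ℝ × ℝ) : WI w (fun z => ∑ i ∈ s, G i z) q = ∑ i ∈ s, WI w (G i) q := by
  simp only [WI, Finset.mul_sum]
  exact integral_finsetSum _ (fun i _ => W_int (h i) hw q)

/-- tangential direction -/
noncomputable def vj {m : ℕ} (j : Fin m) : (ℝ × ℝ) × EU m := (0, EuclideanSpace.single j 1)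
/-- time direction -/
def vt {m : ℕ} : (ℝ × ℝ) × EU m := ((1, 0), 0)
/-- normal direction -/
def vx {m : ℕ} : (ℝ × ℝ) × EU m := ((0, 1), 0)

lemma WI_c {m : ℕ} {G : (ℝ × ℝ) × EU m → ℝ} (h : CSF G) (ξ : EU m) (j : Fin m) (q : ℝ × ℝ) :
    WI (wc ξ) (DD (vj j) G) q = -(2 * Real.pi * ξ j) * WI (ws ξ) G q := by
  simp only [WI, vj]
  rw [W_ibp h (wc_smooth ξ)]
  simp only [wc_deriv, mul_assoc, integral_const_mul]
  simp [EuclideanSpace.inner_single_right]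
  ring

lemma WI_s {m : ℕ} {G : (ℝ × ℝ) × EU m → ℝ} (h : CSF G) (ξ : EU m) (j : Fin m) (q : ℝ × ℝ) :
    WI (ws ξ) (DD (vj j) G) q = (2 * Real.pi * ξ j) * WI (wc ξ) G q := by
  simp only [WI, vj]
  rw [W_ibp h (ws_smooth ξ)]
  simp only [ws_deriv, mul_assoc, neg_mul, integral_neg, integral_const_mul]
  simp [EuclideanSpace.inner_single_right]

lemma WI_cont {m : ℕ} {G : (ℝ × ℝ) × EU m → ℝ} (h : CSF G) {w : EU m → ℝ} (hw : Continuous w) :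
    Continuous (WI w G) :=
  W_cont h (X := ℝ × ℝ) (w := fun z => w z.2) (by fun_prop) continuous_id

lemma WI_contc {m : ℕ} {G : (ℝ × ℝ) × EU m → ℝ} (h : CSF G) :
    Continuous (fun z : (ℝ × ℝ) × EU m => WI (wc z.2) G z.1) := by
  have h2 : Continuous fun z : ((ℝ × ℝ) × EU m) × EU m => wc z.1.2 z.2 := by unfold wc; fun_prop
  have := W_cont (μ := volume) h (X := (ℝ × ℝ) × EU m) h2 (p := fun z => z.1) continuous_fst
  simp only [WI]
  exact this

lemma WI_conts {m : ℕ} {G : (ℝ × ℝ) × EU m → ℝ} (h : CSF G) :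
    Continuous (fun z : (ℝ × ℝ) × EU m => WI (ws z.2) G z.1) := by
  have h2 : Continuous fun z : ((ℝ × ℝ) × EU m) × EU m => ws z.1.2 z.2 := by unfold ws; fun_prop
  have := W_cont (μ := volume) h (X := (ℝ × ℝ) × EU m) h2 (p := fun z => z.1) continuous_fst
  simp only [WI]
  exact this

lemma WI_dt {m : ℕ} {G : (ℝ × ℝ) × EU m → ℝ} (h : CSF G) {w : EU m → ℝ} (hw : Continuous w) (t x : ℝ) :
    HasDerivAt (fun s => WI w G (s, x)) (WI w (DD vt G) (t, x)) t :=
  W_deriv h hw (p := fun s => (s, x)) (v := (1, 0))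
    (fun t => (hasDerivAt_id t).prodMk (hasDerivAt_const t x)) t

lemma WI_dx {m : ℕ} {G : (ℝ × ℝ) × EU m → ℝ} (h : CSF G) {w : EU m → ℝ} (hw : Continuous w) (t x : ℝ) :
    HasDerivAt (fun s => WI w G (t, s)) (WI w (DD vx G) (t, x)) x :=
  W_deriv h hw (p := fun s => (t, s)) (v := (0, 1))
    (fun x => (hasDerivAt_const x t).prodMk (hasDerivAt_id x)) x

/-- The frozen-coefficient operator. -/
noncomputable def FZ {m : ℕ} (lam a : ℝ) (b : Fin m → ℝ) (c : Fin m → Fin m → ℝ)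
    (G : (ℝ × ℝ) × EU m → ℝ) (z : (ℝ × ℝ) × EU m) : ℝ :=
  DD vt G z + a * DD vx (DD vx G) z + 2 * (∑ j, b j * DD (vj j) (DD vx G) z)
    + (∑ j, ∑ k, c j k * DD (vj j) (DD (vj k) G) z) - lam * G z

lemma FZ_csf {m : ℕ} (lam a : ℝ) (b : Fin m → ℝ) (c : Fin m → Fin m → ℝ)
    {G : (ℝ × ℝ) × EU m → ℝ} (h : CSF G) : CSF (FZ lam a b c G) := by
  refine ((((h.dd vt).add (((h.dd vx).dd vx).cmul a)).add (CSF.cmul (CSF.sum _ fun j => ?_) 2)).add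
    (CSF.sum _ fun j => CSF.sum _ fun k => ?_)).sub (h.cmul lam)
  · exact ((h.dd vx).dd _).cmul _
  · exact ((h.dd _).dd _).cmul _

lemma WI_FZ {m : ℕ} {w : EU m → ℝ} (hw : Continuous w) (lam a : ℝ) (b : Fin m → ℝ) (c : Fin m → Fin m → ℝ)
    {G : (ℝ × ℝ) × EU m → ℝ} (h : CSF G) (q : ℝ × ℝ) :
    WI w (FZ lam a b c G) q = WI w (DD vt G) q + a * WI w (DD vx (DD vx G)) q
      + 2 * (∑ j, b j * WI w (DD (vj j) (DD vx G)) q)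
      + (∑ j, ∑ k, c j k * WI w (DD (vj j) (DD (vj k) G)) q) - lam * WI w G q := by
  have c1 : ∀ j, CSF (fun z => b j * DD (vj j) (DD vx G) z) := fun j => ((h.dd vx).dd _).cmul _
  have c2 : ∀ j k, CSF (fun z => c j k * DD (vj j) (DD (vj k) G) z) := fun j k => ((h.dd _).dd _).cmul _
  have c3 := (h.dd vt).add (((h.dd vx).dd vx).cmul a)
  have c4 := (CSF.sum Finset.univ c1).cmul 2
  have c5 := CSF.sum Finset.univ (fun j => CSF.sum Finset.univ (c2 j))
  unfold FZ
  rw [WI_sub hw ((c3.add c4).add c5) (h.cmul lam), WI_add hw (c3.add c4) c5, WI_add hw c3 c4,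
    WI_add hw (h.dd vt) (((h.dd vx).dd vx).cmul a), WI_cmul, WI_cmul, WI_cmul, WI_sum hw _ c1,
    WI_sum hw _ (fun j => CSF.sum Finset.univ (c2 j))]
  simp only [WI_sum hw _ (c2 _), WI_cmul]

lemma WIc_FZ {m : ℕ} (ξ : EU m) (lam a : ℝ) (b : Fin m → ℝ) (c : Fin m → Fin m → ℝ)
    {G : (ℝ × ℝ) × EU m → ℝ} (h : CSF G) (q : ℝ × ℝ) :
    WI (wc ξ) (FZ lam a b c G) q = WI (wc ξ) (DD vt G) q + a * WI (wc ξ) (DD vx (DD vx G)) q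
      - 2 * (∑ j, b j * (2 * Real.pi * ξ j)) * WI (ws ξ) (DD vx G) q
      - ((∑ j, ∑ k, c j k * (2 * Real.pi * ξ j) * (2 * Real.pi * ξ k)) + lam) * WI (wc ξ) G q := by
  rw [WI_FZ (wc_smooth ξ).continuous _ _ _ _ h]
  simp only [WI_c (h.dd _), WI_s h, add_mul, Finset.mul_sum, Finset.sum_mul, sub_add_eq_sub_sub]
  have e1 : ∑ i, 2 * (b i * (-(2 * Real.pi * ξ i) * WI (ws ξ) (DD vx G) q))
    = - ∑ i, 2 * (b i * (2 * Real.pi * ξ i)) * WI (ws ξ) (DD vx G) q := by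
    rw [← Finset.sum_neg_distrib]; exact Finset.sum_congr rfl fun i _ => by ring
  have e2 : ∑ j, ∑ k, c j k * (-(2 * Real.pi * ξ j) * (2 * Real.pi * ξ k * WI (wc ξ) G q))
    = - ∑ j, ∑ k, c j k * (2 * Real.pi * ξ j) * (2 * Real.pi * ξ k) * WI (wc ξ) G q := by
    simp only [← Finset.sum_neg_distrib]
    exact Finset.sum_congr rfl fun i _ => Finset.sum_congr rfl fun k _ => by ring
  rw [e1, e2]; ring

lemma WIs_FZ {m : ℕ} (ξ : EU m) (lam a : ℝ) (b : Fin m → ℝ) (c : Fin m → Fin m → ℝ)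
    {G : (ℝ × ℝ) × EU m → ℝ} (h : CSF G) (q : ℝ × ℝ) :
    WI (ws ξ) (FZ lam a b c G) q = WI (ws ξ) (DD vt G) q + a * WI (ws ξ) (DD vx (DD vx G)) q
      + 2 * (∑ j, b j * (2 * Real.pi * ξ j)) * WI (wc ξ) (DD vx G) q
      - ((∑ j, ∑ k, c j k * (2 * Real.pi * ξ j) * (2 * Real.pi * ξ k)) + lam) * WI (ws ξ) G q := by
  rw [WI_FZ (ws_smooth ξ).continuous _ _ _ _ h]
  simp only [WI_s (h.dd _), WI_c h, add_mul, Finset.mul_sum, Finset.sum_mul, sub_add_eq_sub_sub]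
  have e1 : ∑ i, 2 * (b i * ((2 * Real.pi * ξ i) * WI (wc ξ) (DD vx G) q))
    = ∑ i, 2 * (b i * (2 * Real.pi * ξ i)) * WI (wc ξ) (DD vx G) q := by
    exact Finset.sum_congr rfl fun i _ => by ring
  have e2 : ∑ j, ∑ k, c j k * ((2 * Real.pi * ξ j) * (-(2 * Real.pi * ξ k) * WI (ws ξ) G q))
    = - ∑ j, ∑ k, c j k * (2 * Real.pi * ξ j) * (2 * Real.pi * ξ k) * WI (ws ξ) G q := by
    simp only [← Finset.sum_neg_distrib]
    exact Finset.sum_congr rfl fun i _ => Finset.sum_congr rfl fun k _ => by ring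
  rw [e1, e2]; ring

end PartG

open MeasureTheory

section PartH

/-- squared modulus of the partial Fourier transform -/
noncomputable def MQ {m : ℕ} (G : (ℝ × ℝ) × EU m → ℝ) (ξ : EU m) (q : ℝ × ℝ) : ℝ :=
  WI (wc ξ) G q ^ 2 + WI (ws ξ) G q ^ 2

/-- coefficient hypotheses -/
structure CoefH {m : ℕ} (δ : ℝ) (a : ℝ × ℝ → ℝ) (b : ℝ × ℝ → Fin m → ℝ)
    (c : ℝ × ℝ → Fin m → Fin m → ℝ) : Prop where
  hδ : 0 < δ
  hδ1 : δ ≤ 1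
  am : Measurable a
  bm : ∀ j, Measurable fun q => b q j
  cm : ∀ j k, Measurable fun q => c q j k
  a1 : ∀ q, δ ≤ a q
  a2 : ∀ q, a q ≤ δ⁻¹
  bb : ∀ q j, |b q j| ≤ δ⁻¹
  cb : ∀ q j k, |c q j k| ≤ δ⁻¹
  ell : ∀ q (y : ℝ) (θ : Fin m → ℝ), δ * (y ^ 2 + ∑ j, θ j ^ 2) ≤
    a q * y ^ 2 + 2 * (∑ j, b q j * θ j) * y + ∑ j, ∑ k, c q j k * θ j * θ k

lemma H_fix {m : ℕ} {δ : ℝ} {a : ℝ × ℝ → ℝ} {b : ℝ × ℝ → Fin m → ℝ}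
    {c : ℝ × ℝ → Fin m → Fin m → ℝ} (hc : CoefH δ a b c) {lam : ℝ} (hlam : 0 < lam)
    {G : (ℝ × ℝ) × EU m → ℝ} (h : CSF G) (ξ : EU m) :
    ENNReal.ofReal ((δ * ((∑ j, (2 * Real.pi * ξ j) ^ 2) + lam)) ^ 2) *
      ∫⁻ q in {q : ℝ × ℝ | 0 < q.1}, ENNReal.ofReal (MQ G ξ q) ≤
    ENNReal.ofReal (16 / δ ^ 2 + 16) * ∫⁻ q in {q : ℝ × ℝ | 0 < q.1},
      ENNReal.ofReal (MQ (FZ lam (a q) (b q) (c q) G) ξ q) := by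
  obtain ⟨R, hR, hs⟩ := h.supp
  have hwc := (wc_smooth ξ).continuous
  have hws := (ws_smooth ξ).continuous
  set η : Fin m → ℝ := fun j => 2 * Real.pi * ξ j with hη
  have st := DD_supp hs vt
  have sx := DD_supp hs vx
  have sxx := DD_supp sx vx
  have res := C_main2 (H := ∑ j, η j ^ 2) hc.hδ hc.hδ1 hlam (Finset.sum_nonneg fun j _ => sq_nonneg _)
    hc.am hc.a1 hc.a2 (β := fun q => ∑ j, b q j * η j) (γ := fun q => ∑ j, ∑ k, c q j k * η j * η k)
    (Finset.measurable_fun_sum _ fun j _ => (hc.bm j).mul_const _)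
    (Finset.measurable_fun_sum _ fun j _ => Finset.measurable_fun_sum _ fun k _ =>
      ((hc.cm j k).mul_const _).mul_const _)
    (Cβ := ∑ j, δ⁻¹ * |η j|) (Cγ := ∑ j, ∑ k, δ⁻¹ * |η j| * |η k|)
    (fun q => (Finset.abs_sum_le_sum_abs _ _).trans (Finset.sum_le_sum fun j _ => by
      rw [abs_mul]; exact mul_le_mul_of_nonneg_right (hc.bb q j) (abs_nonneg _)))
    (fun q => (Finset.abs_sum_le_sum_abs _ _).trans (Finset.sum_le_sum fun j _ =>
      (Finset.abs_sum_le_sum_abs _ _).trans (Finset.sum_le_sum fun k _ => by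
      rw [abs_mul, abs_mul]
      exact mul_le_mul_of_nonneg_right (mul_le_mul_of_nonneg_right (hc.cb q j k) (abs_nonneg _)) (abs_nonneg _))))
    (by
      intro q y z
      have := hc.ell q y (fun j => z * η j)
      have e1 : ∑ j, (z * η j) ^ 2 = (∑ j, η j ^ 2) * z ^ 2 := by
        rw [Finset.sum_mul]; exact Finset.sum_congr rfl fun j _ => by ring
      have e2 : ∑ j, b q j * (z * η j) = (∑ j, b q j * η j) * z := by
        rw [Finset.sum_mul]; exact Finset.sum_congr rfl fun j _ => by ring
      have e3 : ∑ j, ∑ k, c q j k * (z * η j) * (z * η k) = (∑ j, ∑ k, c q j k * η j * η k) * z ^ 2 := by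
        simp only [Finset.sum_mul]
        exact Finset.sum_congr rfl fun j _ => Finset.sum_congr rfl fun k _ => by ring
      rw [e1, e2, e3] at this
      linarith)
    (WI_cont h hwc) (WI_cont (h.dd vt) hwc) (WI_cont (h.dd vx) hwc) (WI_cont ((h.dd vx).dd vx) hwc)
    (WI_cont h hws) (WI_cont (h.dd vt) hws) (WI_cont (h.dd vx) hws) (WI_cont ((h.dd vx).dd vx) hws)
    (WI_dt h hwc) (WI_dx h hwc) (WI_dx (h.dd vx) hwc)
    (WI_dt h hws) (WI_dx h hws) (WI_dx (h.dd vx) hws) hR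
    (W_supp hs _) (W_supp st _) (W_supp sx _) (W_supp sxx _)
    (W_supp hs _) (W_supp st _) (W_supp sx _) (W_supp sxx _)
  simp only [hη, ← WIc_FZ ξ lam _ _ _ h, ← WIs_FZ ξ lam _ _ _ h] at res
  obtain ⟨i1, i2⟩ := res
  have cA := WI_cont h hwc
  have cB := WI_cont h hws
  obtain ⟨kA, hkA⟩ := C_bdd cA (W_supp hs _)
  obtain ⟨kB, hkB⟩ := C_bdd cB (W_supp hs _)
  have i0 : Integrable (fun q => WI (wc ξ) G q ^ 2 + WI (ws ξ) G q ^ 2) :=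
    I_add (A_memLp_bdd cA.measurable hkA (W_supp hs _)).integrable_sq
      (A_memLp_bdd cB.measurable hkB (W_supp hs _)).integrable_sq
  simp only [MQ]
  have hδ := hc.hδ
  rw [← ofReal_integral_eq_lintegral_ofReal i0.restrict (Filter.Eventually.of_forall fun q => by positivity),
    ← ofReal_integral_eq_lintegral_ofReal i1.restrict (Filter.Eventually.of_forall fun q => by positivity),
    ← ENNReal.ofReal_mul (by positivity), ← ENNReal.ofReal_mul (by positivity)]
  apply ENNReal.ofReal_le_ofReal
  refine i2.trans (le_of_eq ?_)
  ring

lemma MQ_meas {m : ℕ} {G : (ℝ × ℝ) × EU m → ℝ} (h : CSF G) :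
    Measurable (fun z : (ℝ × ℝ) × EU m => MQ G z.2 z.1) := by
  unfold MQ
  exact (((WI_contc h).pow 2).add ((WI_conts h).pow 2)).measurable

lemma MQ_FZ_meas {m : ℕ} {δ : ℝ} {a : ℝ × ℝ → ℝ} {b : ℝ × ℝ → Fin m → ℝ}
    {c : ℝ × ℝ → Fin m → Fin m → ℝ} (hc : CoefH δ a b c) (lam : ℝ)
    {G : (ℝ × ℝ) × EU m → ℝ} (h : CSF G) :
    Measurable (fun z : (ℝ × ℝ) × EU m => MQ (FZ lam (a z.1) (b z.1) (c z.1) G) z.2 z.1) := by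
  unfold MQ
  simp only [WIc_FZ _ lam _ _ _ h, WIs_FZ _ lam _ _ _ h]
  have h1 := (WI_contc h).measurable
  have h2 := (WI_contc (h.dd vt)).measurable
  have h3 := (WI_contc (h.dd vx)).measurable
  have h4 := (WI_contc ((h.dd vx).dd vx)).measurable
  have k1 := (WI_conts h).measurable
  have k2 := (WI_conts (h.dd vt)).measurable
  have k3 := (WI_conts (h.dd vx)).measurable
  have k4 := (WI_conts ((h.dd vx).dd vx)).measurable
  have a1 : Measurable (fun z : (ℝ × ℝ) × EU m => a z.1) := hc.am.comp measurable_fst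
  have x1 : ∀ j, Measurable (fun z : (ℝ × ℝ) × EU m => 2 * Real.pi * z.2 j) := fun j => by
    apply Continuous.measurable; fun_prop
  have b1 : Measurable (fun z : (ℝ × ℝ) × EU m => ∑ j, b z.1 j * (2 * Real.pi * z.2 j)) :=
    Finset.measurable_fun_sum _ fun j _ => ((hc.bm j).comp measurable_fst).mul (x1 j)
  have c1 : Measurable (fun z : (ℝ × ℝ) × EU m => ∑ j, ∑ k, c z.1 j k * (2 * Real.pi * z.2 j)
      * (2 * Real.pi * z.2 k)) :=
    Finset.measurable_fun_sum _ fun j _ => Finset.measurable_fun_sum _ fun k _ =>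
      (((hc.cm j k).comp measurable_fst).mul (x1 j)).mul (x1 k)
  exact ((((h2.add (a1.mul h4)).sub ((b1.const_mul 2).mul k3)).sub ((c1.add_const lam).mul h1)).pow_const 2).add
    ((((k2.add (a1.mul k4)).add ((b1.const_mul 2).mul h3)).sub ((c1.add_const lam).mul k1)).pow_const 2)

lemma H_main {m : ℕ} {δ : ℝ} {a : ℝ × ℝ → ℝ} {b : ℝ × ℝ → Fin m → ℝ}
    {c : ℝ × ℝ → Fin m → Fin m → ℝ} (hc : CoefH δ a b c) {lam : ℝ} (hlam : 0 < lam)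
    {G : (ℝ × ℝ) × EU m → ℝ} (h : CSF G) {U : (ℝ × ℝ) × EU m → ℝ} (hU : CSF U)
    (hUG : ∀ ξ q, MQ U ξ q ≤ ((∑ j, (2 * Real.pi * ξ j) ^ 2) + lam) ^ 2 * MQ G ξ q) :
    ENNReal.ofReal (δ ^ 2) * ∫⁻ q in {q : ℝ × ℝ | 0 < q.1}, ∫⁻ y, ENNReal.ofReal (U (q, y) ^ 2) ≤
    ENNReal.ofReal (16 / δ ^ 2 + 16) * ∫⁻ q in {q : ℝ × ℝ | 0 < q.1}, ∫⁻ y,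
      ENNReal.ofReal (FZ lam (a q) (b q) (c q) G (q, y) ^ 2) := by
  have p1 : ∀ q, ∫⁻ y, ENNReal.ofReal (U (q, y) ^ 2) = ∫⁻ ξ, ENNReal.ofReal (MQ U ξ q) :=
    fun q => (planch (hU.slice q)).symm
  have p2 : ∀ q, ∫⁻ y, ENNReal.ofReal (FZ lam (a q) (b q) (c q) G (q, y) ^ 2)
      = ∫⁻ ξ, ENNReal.ofReal (MQ (FZ lam (a q) (b q) (c q) G) ξ q) :=
    fun q => (planch ((FZ_csf lam (a q) (b q) (c q) h).slice q)).symm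
  simp only [p1, p2]
  rw [lintegral_lintegral_swap (f := fun q ξ => ENNReal.ofReal (MQ U ξ q))
      (MQ_meas hU).ennreal_ofReal.aemeasurable,
    lintegral_lintegral_swap (f := fun q ξ => ENNReal.ofReal (MQ (FZ lam (a q) (b q) (c q) G) ξ q))
      (MQ_FZ_meas hc lam h).ennreal_ofReal.aemeasurable,
    ← lintegral_const_mul' _ _ ENNReal.ofReal_ne_top, ← lintegral_const_mul' _ _ ENNReal.ofReal_ne_top]
  apply lintegral_mono
  intro ξ
  refine le_trans ?_ (H_fix hc hlam h ξ)
  rw [mul_pow, ENNReal.ofReal_mul (by positivity), mul_assoc]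
  refine mul_le_mul' le_rfl ?_
  rw [← lintegral_const_mul' _ _ ENNReal.ofReal_ne_top]
  apply lintegral_mono
  intro q
  dsimp only
  rw [← ENNReal.ofReal_mul (by positivity)]
  exact ENNReal.ofReal_le_ofReal (hUG ξ q)

lemma H_main0 {m : ℕ} {δ : ℝ} {a : ℝ × ℝ → ℝ} {b : ℝ × ℝ → Fin m → ℝ}
    {c : ℝ × ℝ → Fin m → Fin m → ℝ} (hc : CoefH δ a b c) {lam : ℝ} (hlam : 0 < lam)
    {G : (ℝ × ℝ) × EU m → ℝ} (h : CSF G) :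
    ENNReal.ofReal (δ ^ 2) * ∫⁻ q in {q : ℝ × ℝ | 0 < q.1}, ∫⁻ y, ENNReal.ofReal ((lam * G (q, y)) ^ 2) ≤
    ENNReal.ofReal (16 / δ ^ 2 + 16) * ∫⁻ q in {q : ℝ × ℝ | 0 < q.1}, ∫⁻ y,
      ENNReal.ofReal (FZ lam (a q) (b q) (c q) G (q, y) ^ 2) := by
  refine H_main hc hlam h (U := fun z => lam * G z) (h.cmul lam) ?_
  intro ξ q
  have h0 : 0 ≤ ∑ j, (2 * Real.pi * ξ j) ^ 2 := Finset.sum_nonneg fun j _ => sq_nonneg _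
  have h1 : 0 ≤ MQ G ξ q := by unfold MQ; positivity
  have : MQ (fun z => lam * G z) ξ q = lam ^ 2 * MQ G ξ q := by
    simp only [MQ, WI_cmul]; ring
  rw [this]
  apply mul_le_mul_of_nonneg_right _ h1
  apply pow_le_pow_left₀ hlam.le; linarith

lemma H_main2 {m : ℕ} {δ : ℝ} {a : ℝ × ℝ → ℝ} {b : ℝ × ℝ → Fin m → ℝ}
    {c : ℝ × ℝ → Fin m → Fin m → ℝ} (hc : CoefH δ a b c) {lam : ℝ} (hlam : 0 < lam)
    {G : (ℝ × ℝ) × EU m → ℝ} (h : CSF G) (j k : Fin m) :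
    ENNReal.ofReal (δ ^ 2) * ∫⁻ q in {q : ℝ × ℝ | 0 < q.1}, ∫⁻ y,
      ENNReal.ofReal (DD (vj j) (DD (vj k) G) (q, y) ^ 2) ≤
    ENNReal.ofReal (16 / δ ^ 2 + 16) * ∫⁻ q in {q : ℝ × ℝ | 0 < q.1}, ∫⁻ y,
      ENNReal.ofReal (FZ lam (a q) (b q) (c q) G (q, y) ^ 2) := by
  refine H_main hc hlam h ((h.dd _).dd _) ?_
  intro ξ q
  have h1 : 0 ≤ MQ G ξ q := by unfold MQ; positivity
  have : MQ (DD (vj j) (DD (vj k) G)) ξ q = ((2 * Real.pi * ξ j) ^ 2 * (2 * Real.pi * ξ k) ^ 2) * MQ G ξ q := by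
    simp only [MQ, WI_c (h.dd _), WI_s (h.dd _), WI_c h, WI_s h]; ring
  rw [this]
  apply mul_le_mul_of_nonneg_right _ h1
  have hj : (2 * Real.pi * ξ j) ^ 2 ≤ ∑ j, (2 * Real.pi * ξ j) ^ 2 :=
    Finset.single_le_sum (f := fun j => (2 * Real.pi * ξ j) ^ 2) (fun j _ => sq_nonneg _) (Finset.mem_univ j)
  have hk : (2 * Real.pi * ξ k) ^ 2 ≤ ∑ j, (2 * Real.pi * ξ j) ^ 2 :=
    Finset.single_le_sum (f := fun j => (2 * Real.pi * ξ j) ^ 2) (fun j _ => sq_nonneg _) (Finset.mem_univ k)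
  have h0 : 0 ≤ ∑ j, (2 * Real.pi * ξ j) ^ 2 := Finset.sum_nonneg fun j _ => sq_nonneg _
  rw [sq ((∑ j, (2 * Real.pi * ξ j) ^ 2) + lam)]
  exact mul_le_mul (by linarith) (by linarith) (sq_nonneg _) (by linarith)

end PartH

open MeasureTheory

section PartI

/-- The coordinate identification. -/
noncomputable def embE (m : ℕ) : ((ℝ × ℝ) × EU m) ≃L[ℝ] (ℝ × (Fin (m + 1) → ℝ)) :=
  LinearEquiv.toContinuousLinearEquiv
  { toFun := fun z => (z.1.1, Fin.cons z.1.2 z.2.ofLp)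
    map_add' := by
      intro x y
      ext j
      · rfl
      · refine Fin.cases ?_ (fun i => ?_) j <;> simp
    map_smul' := by
      intro c x
      ext j
      · rfl
      · refine Fin.cases ?_ (fun i => ?_) j <;> simp
    invFun := fun w => ((w.1, w.2 0), WithLp.toLp 2 (fun j => w.2 j.succ))
    left_inv := by intro x; simp
    right_inv := by
      intro x
      ext j
      · rfl
      · refine Fin.cases ?_ (fun i => ?_) j <;> simp }

lemma embE_apply {m : ℕ} (z : (ℝ × ℝ) × EU m) : embE m z = (z.1.1, Fin.cons z.1.2 z.2.ofLp) := rfl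

lemma embE_vt {m : ℕ} : embE m vt = (1, 0) := by
  rw [embE_apply]
  ext j
  · rfl
  · refine Fin.cases ?_ (fun i => ?_) j <;> simp [vt]

lemma embE_vx {m : ℕ} : embE m vx = (0, Pi.single 0 1) := by
  rw [embE_apply]
  ext j
  · rfl
  · refine Fin.cases ?_ (fun i => ?_) j <;> simp [vx]

lemma embE_vj {m : ℕ} (j : Fin m) : embE m (vj j) = (0, Pi.single j.succ 1) := by
  rw [embE_apply]
  ext k
  · rfl
  · refine Fin.cases ?_ (fun i => ?_) k
    · simp [vj]
    · simp [vj, Pi.single_apply]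

lemma embE_mp (m : ℕ) : MeasurePreserving (embE m) := by
  have h1 := (volume_preserving_prodAssoc (α₁ := ℝ) (β₁ := ℝ) (γ₁ := EU m))
  have h2 := (MeasurePreserving.id (volume : Measure ℝ)).prod
    ((MeasurePreserving.id (volume : Measure ℝ)).prod (PiLp.volume_preserving_ofLp (Fin m)))
  have h3 := (MeasurePreserving.id (volume : Measure ℝ)).prod
    (volume_preserving_piFinSuccAbove (fun _ : Fin (m + 1) => ℝ) 0).symm
  have := (h3.comp h2).comp h1
  convert! this using 1
  funext z
  refine Prod.ext rfl ?_
  funext j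
  refine Fin.cases ?_ (fun i => ?_) j
  · rfl
  · rfl

lemma embE_csf {m : ℕ} {u : ℝ × (Fin (m + 1) → ℝ) → ℝ} (h : CSF u) : CSF (fun z => u (embE m z)) :=
  ⟨h.1.comp (embE m).contDiff, h.2.comp_homeomorph (embE m).toHomeomorph⟩

lemma embE_lint {m : ℕ} {f : ℝ × (Fin (m + 1) → ℝ) → ENNReal} (hf : Measurable f) :
    ∫⁻ q in {q : ℝ × ℝ | 0 < q.1}, ∫⁻ y, f (embE m (q, y)) = ∫⁻ p in {p | 0 < p.1}, f p := by
  have hm : MeasurableSet {p : ℝ × (Fin (m + 1) → ℝ) | 0 < p.1} := measurableSet_lt measurable_const measurable_fst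
  rw [← (embE_mp m).setLIntegral_comp_preimage hm hf]
  have e : (embE m) ⁻¹' {p : ℝ × (Fin (m + 1) → ℝ) | 0 < p.1} = {q : ℝ × ℝ | 0 < q.1} ×ˢ Set.univ := by
    ext z; simp [embE_apply]
  rw [e, Measure.volume_eq_prod (ℝ × ℝ) (EU m), ← Measure.prod_restrict, Measure.restrict_univ, lintegral_prod]
  exact (hf.comp (embE m).continuous.measurable).aemeasurable

/-- coefficient hypotheses -/
structure CoefA {n : ℕ} (δ : ℝ) (a : ℝ × ℝ → Fin n → Fin n → ℝ) : Prop where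
  hδ : 0 < δ
  hδ1 : δ ≤ 1
  am : ∀ j k, Measurable fun q => a q j k
  sym : ∀ q j k, a q j k = a q k j
  ell : ∀ (q : ℝ × ℝ) (θ : Fin n → ℝ),
          δ * ∑ j, (θ j) ^ 2 ≤ ∑ j, ∑ k, a q j k * θ j * θ k ∧
          ∑ j, ∑ k, a q j k * θ j * θ k ≤ δ⁻¹ * ∑ j, (θ j) ^ 2

lemma CoefA.diag {n : ℕ} {δ : ℝ} {a : ℝ × ℝ → Fin n → Fin n → ℝ} (h : CoefA δ a) (q : ℝ × ℝ) (j : Fin n) :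
    δ ≤ a q j j ∧ a q j j ≤ δ⁻¹ := by
  have := h.ell q (Pi.single j 1)
  simpa [Pi.single_apply, Finset.sum_ite_eq] using this

lemma CoefA.bd {n : ℕ} {δ : ℝ} {a : ℝ × ℝ → Fin n → Fin n → ℝ} (h : CoefA δ a) (q : ℝ × ℝ) (j k : Fin n) :
    |a q j k| ≤ δ⁻¹ := by
  have hδ := h.hδ
  have dj := h.diag q j
  have dk := h.diag q k
  by_cases hjk : j = k
  · subst hjk
    rw [abs_le]; constructor <;> linarith [inv_pos.2 hδ]
  have key : ∀ s : ℝ, s ^ 2 = 1 → a q j j + a q k k + 2 * s * a q j k ≤ 2 * δ⁻¹ := by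
    intro s hs
    have := (h.ell q (Pi.single j 1 + Pi.single k s)).2
    have e1 : ∑ i, (Pi.single j (1 : ℝ) + Pi.single k s : Fin n → ℝ) i ^ 2 = 2 := by
      have : ∀ i, (Pi.single j (1 : ℝ) + Pi.single k s : Fin n → ℝ) i ^ 2
          = (if i = j then 1 else 0) + (if i = k then 1 else 0) := by
        intro i
        simp only [Pi.add_apply, Pi.single_apply]
        split_ifs with h1 h2 h2
        · exact absurd (h1.symm.trans h2) hjk
        · norm_num
        · simpa using hs
        · norm_num
      simp only [this, Finset.sum_add_distrib, Finset.sum_ite_eq', Finset.mem_univ, if_true]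
      norm_num
    have e2 : ∑ i, ∑ l, a q i l * (Pi.single j (1 : ℝ) + Pi.single k s : Fin n → ℝ) i
        * (Pi.single j (1 : ℝ) + Pi.single k s : Fin n → ℝ) l = a q j j + a q k k + 2 * s * a q j k := by
      simp only [Pi.add_apply, Pi.single_apply, mul_add, add_mul, Finset.sum_add_distrib, mul_ite, ite_mul,
        mul_one, mul_zero, zero_mul, Finset.sum_ite_eq', Finset.mem_univ, if_true]
      rw [h.sym q k j]
      linear_combination a q k k * hs
    rw [e1, e2] at this
    linarith
  have k1 := key 1 (by norm_num)
  have k2 := key (-1) (by norm_num)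
  rw [abs_le]; constructor <;> linarith

lemma CoefA.toH {m : ℕ} {δ : ℝ} {a : ℝ × ℝ → Fin (m + 1) → Fin (m + 1) → ℝ} (h : CoefA δ a) :
    CoefH δ (fun q => a q 0 0) (fun q j => a q j.succ 0) (fun q j k => a q j.succ k.succ) where
  hδ := h.hδ
  hδ1 := h.hδ1
  am := h.am 0 0
  bm j := h.am j.succ 0
  cm j k := h.am j.succ k.succ
  a1 q := (h.diag q 0).1
  a2 q := (h.diag q 0).2
  bb q j := h.bd q _ _
  cb q j k := h.bd q _ _
  ell q y θ := by
    have := (h.ell q (Fin.cons y θ)).1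
    simp only [Fin.sum_univ_succ, Fin.cons_zero, Fin.cons_succ, Finset.sum_add_distrib] at this
    refine this.trans (le_of_eq ?_)
    have e1 : ∑ i : Fin m, a q 0 i.succ * y * θ i = (∑ j : Fin m, a q j.succ 0 * θ j) * y := by
      rw [Finset.sum_mul]; exact Finset.sum_congr rfl fun i _ => by rw [h.sym q 0 i.succ]; ring
    have e2 : ∑ i : Fin m, a q i.succ 0 * θ i * y = (∑ j : Fin m, a q j.succ 0 * θ j) * y := by
      rw [Finset.sum_mul]
    rw [e1, e2]; ring

/-- The main operator minus `lam`. -/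
noncomputable def LF {m : ℕ} (a : ℝ × ℝ → Fin (m + 1) → Fin (m + 1) → ℝ) (lam : ℝ)
    (u : ℝ × (Fin (m + 1) → ℝ) → ℝ) (p : ℝ × (Fin (m + 1) → ℝ)) : ℝ :=
  pdt u p + (∑ j, ∑ k, a (p.1, p.2 0) j k * pdxx j k u p) - lam * u p

lemma FZ_LF {m : ℕ} {δ : ℝ} {a : ℝ × ℝ → Fin (m + 1) → Fin (m + 1) → ℝ} (h : CoefA δ a) (lam : ℝ)
    {u : ℝ × (Fin (m + 1) → ℝ) → ℝ} (hu : CSF u) (q : ℝ × ℝ) (y : EU m) :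
    FZ lam (a q 0 0) (fun j => a q j.succ 0) (fun j k => a q j.succ k.succ)
      (fun z => u (embE m z)) (q, y) = LF a lam u (embE m (q, y)) := by
  have d1 : ∀ {f : ℝ × (Fin (m + 1) → ℝ) → ℝ}, CSF f → ∀ v, DD v (fun z => f (embE m z)) =
      fun z => DD (embE m v) f (embE m z) := fun hf v => DD_comp_lin (embE m).toContinuousLinearMap hf v
  have hq : ((embE m (q, y)).1, (embE m (q, y)).2 0) = q := by simp [embE_apply]
  simp only [FZ, LF, hq]
  simp only [d1 hu]
  simp only [d1 (hu.dd _), embE_vt, embE_vx, embE_vj]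
  simp only [Fin.sum_univ_succ, Finset.sum_add_distrib]
  have e0 : ∀ j k, pdxx j k u = DD (0, Pi.single j 1) (DD (0, Pi.single k 1) u) := fun j k => rfl
  have e1 : pdt u = DD (1, 0) u := rfl
  simp only [e0, e1]
  have e3 : ∑ i : Fin m, a q 0 i.succ * DD (0, Pi.single 0 1) (DD (0, Pi.single i.succ 1) u) (embE m (q, y))
    = ∑ i : Fin m, a q i.succ 0 * DD (0, Pi.single i.succ 1) (DD (0, Pi.single 0 1) u) (embE m (q, y)) :=
    Finset.sum_congr rfl fun i _ => by rw [h.sym q 0 i.succ, DD_comm hu]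
  rw [e3]; ring

lemma ML_csf {n : ℕ} {f : ℝ × (Fin n → ℝ) → ℝ} (h : CSF f) : MemLp f 2 volume :=
  h.cont.memLp_of_hasCompactSupport h.2

lemma ML_bmul {n : ℕ} {f : ℝ × (Fin n → ℝ) → ℝ} (h : MemLp f 2 volume) {c : ℝ × (Fin n → ℝ) → ℝ}
    (hc : Measurable c) {C : ℝ} (hC : ∀ p, |c p| ≤ C) : MemLp (fun p => c p * f p) 2 volume := by
  apply h.of_le_mul (c := C) (hc.aestronglyMeasurable.mul h.1)
  refine Filter.Eventually.of_forall fun p => ?_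
  change ‖c p * f p‖ ≤ _
  rw [norm_mul]
  exact mul_le_mul_of_nonneg_right (hC p) (norm_nonneg _)

lemma pdt_csf {n : ℕ} {u : ℝ × (Fin n → ℝ) → ℝ} (h : CSF u) : CSF (pdt u) := h.dd _
lemma pdx_csf {n : ℕ} {u : ℝ × (Fin n → ℝ) → ℝ} (h : CSF u) (j : Fin n) : CSF (pdx j u) := h.dd _
lemma pdxx_csf {n : ℕ} {u : ℝ × (Fin n → ℝ) → ℝ} (h : CSF u) (j k : Fin n) : CSF (pdxx j k u) := (h.dd _).dd _

lemma coef_meas {m : ℕ} {δ : ℝ} {a : ℝ × ℝ → Fin (m + 1) → Fin (m + 1) → ℝ} (h : CoefA δ a) (j k) :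
    Measurable (fun p : ℝ × (Fin (m + 1) → ℝ) => a (p.1, p.2 0) j k) :=
  (h.am j k).comp (measurable_fst.prodMk ((measurable_pi_apply 0).comp measurable_snd))

lemma LF_ml {m : ℕ} {δ : ℝ} {a : ℝ × ℝ → Fin (m + 1) → Fin (m + 1) → ℝ} (h : CoefA δ a) (lam : ℝ)
    {u : ℝ × (Fin (m + 1) → ℝ) → ℝ} (hu : CSF u) : MemLp (LF a lam u) 2 volume := by
  refine ((ML_csf (pdt_csf hu)).add (memLp_finsetSum _ fun j _ => memLp_finsetSum _ fun k _ => ?_)).sub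
    ((ML_csf hu).const_mul lam)
  exact ML_bmul (ML_csf (pdxx_csf hu j k)) (coef_meas h j k) (fun p => h.bd _ j k)

lemma LF_meas {m : ℕ} {δ : ℝ} {a : ℝ × ℝ → Fin (m + 1) → Fin (m + 1) → ℝ} (h : CoefA δ a) (lam : ℝ)
    {u : ℝ × (Fin (m + 1) → ℝ) → ℝ} (hu : CSF u) : Measurable (LF a lam u) := by
  refine ((pdt_csf hu).cont.measurable.add (Finset.measurable_fun_sum _ fun j _ =>
    Finset.measurable_fun_sum _ fun k _ => ?_)).sub (hu.cont.measurable.const_mul lam)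
  exact (coef_meas h j k).mul (pdxx_csf hu j k).cont.measurable

lemma I_conv {m : ℕ} {δ : ℝ} (hδ : 0 < δ) {f g : ℝ × (Fin (m + 1) → ℝ) → ℝ}
    (hf : MemLp f 2 volume) (hg : MemLp g 2 volume) (mf : Measurable f) (mg : Measurable g)
    (h : ENNReal.ofReal (δ ^ 2) * ∫⁻ q in {q : ℝ × ℝ | 0 < q.1}, ∫⁻ y, ENNReal.ofReal (f (embE m (q, y)) ^ 2) ≤
    ENNReal.ofReal (16 / δ ^ 2 + 16) * ∫⁻ q in {q : ℝ × ℝ | 0 < q.1}, ∫⁻ y,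
      ENNReal.ofReal (g (embE m (q, y)) ^ 2)) :
    δ ^ 2 * ∫ p in {p : ℝ × (Fin (m + 1) → ℝ) | 0 < p.1}, f p ^ 2 ≤
      (16 / δ ^ 2 + 16) * ∫ p in {p : ℝ × (Fin (m + 1) → ℝ) | 0 < p.1}, g p ^ 2 := by
  rw [embE_lint (f := fun p => ENNReal.ofReal (f p ^ 2)) (mf.pow_const 2).ennreal_ofReal,
    embE_lint (f := fun p => ENNReal.ofReal (g p ^ 2)) (mg.pow_const 2).ennreal_ofReal,
    ← ofReal_integral_eq_lintegral_ofReal hf.integrable_sq.restrict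
      (Filter.Eventually.of_forall fun q => by positivity),
    ← ofReal_integral_eq_lintegral_ofReal hg.integrable_sq.restrict
      (Filter.Eventually.of_forall fun q => by positivity),
    ← ENNReal.ofReal_mul (by positivity), ← ENNReal.ofReal_mul (by positivity)] at h
  refine (ENNReal.ofReal_le_ofReal_iff ?_).1 h
  have : 0 ≤ ∫ p in {p : ℝ × (Fin (m + 1) → ℝ) | 0 < p.1}, g p ^ 2 := integral_nonneg fun p => by positivity
  positivity

lemma I_main0 {m : ℕ} {δ : ℝ} {a : ℝ × ℝ → Fin (m + 1) → Fin (m + 1) → ℝ} (h : CoefA δ a) {lam : ℝ}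
    (hlam : 0 < lam) {u : ℝ × (Fin (m + 1) → ℝ) → ℝ} (hu : CSF u) :
    δ ^ 2 * ∫ p in {p : ℝ × (Fin (m + 1) → ℝ) | 0 < p.1}, (lam * u p) ^ 2 ≤
      (16 / δ ^ 2 + 16) * ∫ p in {p : ℝ × (Fin (m + 1) → ℝ) | 0 < p.1}, LF a lam u p ^ 2 := by
  apply I_conv h.hδ ((ML_csf hu).const_mul lam) (LF_ml h lam hu) (hu.cont.measurable.const_mul lam) (LF_meas h lam hu)
  have := H_main0 h.toH hlam (embE_csf hu)
  simpa only [FZ_LF h lam hu] using this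

lemma I_main2 {m : ℕ} {δ : ℝ} {a : ℝ × ℝ → Fin (m + 1) → Fin (m + 1) → ℝ} (h : CoefA δ a) {lam : ℝ}
    (hlam : 0 < lam) {u : ℝ × (Fin (m + 1) → ℝ) → ℝ} (hu : CSF u) (j k : Fin m) :
    δ ^ 2 * ∫ p in {p : ℝ × (Fin (m + 1) → ℝ) | 0 < p.1}, pdxx j.succ k.succ u p ^ 2 ≤
      (16 / δ ^ 2 + 16) * ∫ p in {p : ℝ × (Fin (m + 1) → ℝ) | 0 < p.1}, LF a lam u p ^ 2 := by
  have hc := pdxx_csf hu j.succ k.succ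
  apply I_conv h.hδ (ML_csf hc) (LF_ml h lam hu) hc.cont.measurable (LF_meas h lam hu)
  have := H_main2 h.toH hlam (embE_csf hu) j k
  have d1 : ∀ {f : ℝ × (Fin (m + 1) → ℝ) → ℝ}, CSF f → ∀ v, DD v (fun z => f (embE m z)) =
      fun z => DD (embE m v) f (embE m z) := fun hf v => DD_comp_lin (embE m).toContinuousLinearMap hf v
  simp only [FZ_LF h lam hu, d1 hu, d1 (hu.dd _), embE_vj] at this
  exact this

end PartI

open MeasureTheory

section PartJ

/-- half space -/
def HS (n : ℕ) : Set (ℝ × (Fin n → ℝ)) := {p | 0 < p.1}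

lemma HS_meas (n : ℕ) : MeasurableSet (HS n) := measurableSet_lt measurable_const measurable_fst

lemma HS_eq (n : ℕ) : (volume : Measure (ℝ × (Fin n → ℝ))).restrict (HS n) =
    ((volume : Measure ℝ).restrict (Set.Ioi 0)).prod (volume : Measure (Fin n → ℝ)) := by
  have : HS n = Set.Ioi (0 : ℝ) ×ˢ (Set.univ : Set (Fin n → ℝ)) := by ext p; simp [HS]
  rw [this, Measure.volume_eq_prod, ← Measure.prod_restrict, Measure.restrict_univ]

lemma csf_int {n : ℕ} {f : ℝ × (Fin n → ℝ) → ℝ} (h : CSF f) : Integrable f volume :=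
  h.cont.integrable_of_hasCompactSupport h.2

lemma J_X {n : ℕ} {f : ℝ × (Fin n → ℝ) → ℝ} (h : CSF f) (j : Fin n) : ∫ p in HS n, pdx j f p = 0 := by
  have hi : Integrable (pdx j f) (volume.restrict (HS n)) := (csf_int (pdx_csf h j)).restrict
  rw [HS_eq] at *
  rw [integral_prod _ hi]
  have : ∀ t : ℝ, ∫ x, pdx j f (t, x) = 0 := by
    intro t
    have := W_ibp (μ := volume) h (w := fun _ => (1 : ℝ)) contDiff_const t (Pi.single j 1)
    simp at this
    exact this
  simp [this]

lemma J_T {n : ℕ} {g : ℝ × (Fin n → ℝ) → ℝ} (h : CSF g) (h0 : ∀ p, 0 ≤ g p) : ∫ p in HS n, pdt g p ≤ 0 := by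
  have hi : Integrable (pdt g) (volume.restrict (HS n)) := (csf_int (pdt_csf h)).restrict
  rw [HS_eq] at *
  rw [integral_prod_symm _ hi]
  apply integral_nonpos
  intro x
  have hd : ∀ t : ℝ, HasDerivAt (fun s => g (s, x)) (pdt g (t, x)) t := fun t => by
    have := DD_path h (p := fun s : ℝ => s) (hasDerivAt_id t) x
    exact this
  obtain ⟨R, hR, hs⟩ := h.supp
  have hlim : Filter.Tendsto (fun s : ℝ => g (s, x)) Filter.atTop (nhds 0) := by
    apply tendsto_const_nhds.congr'
    filter_upwards [Filter.eventually_gt_atTop R] with s hs'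
    symm; apply hs
    refine lt_of_lt_of_le ?_ (norm_fst_le (s, x))
    simpa using hs'.trans_le (le_abs_self s)
  have hc : CSF (fun s : ℝ => pdt g (s, x)) := by
    have h' := pdt_csf h
    refine ⟨h'.1.comp (contDiff_id.prodMk contDiff_const), ?_⟩
    obtain ⟨R', hR', hs'⟩ := h'.supp
    apply HasCompactSupport.of_support_subset_isCompact (isCompact_closedBall (0 : ℝ) R')
    intro y hy
    by_contra hn
    apply hy
    apply hs'
    simp only [Metric.mem_closedBall, dist_zero_right, not_le] at hn
    exact hn.trans_le (norm_fst_le (y, x))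
  have := integral_Ioi_of_hasDerivAt_of_tendsto (f := fun s => g (s, x)) (a := 0)
    (hd 0).continuousAt.continuousWithinAt (fun t _ => hd t)
    (hc.cont.integrable_of_hasCompactSupport hc.2).integrableOn hlim
  simp only [Pi.zero_apply]
  rw [this]
  linarith [h0 (0, x)]

lemma DD_mul {V : Type*} [NormedAddCommGroup V] [NormedSpace ℝ V] {f g : V → ℝ} (hf : CSF f) (hg : CSF g)
    (v : V) (z : V) : DD v (fun z => f z * g z) z = f z * DD v g z + DD v f z * g z := by
  have := ((hf.diff z).hasFDerivAt.mul (hg.diff z).hasFDerivAt).fderiv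
  change fderiv ℝ (f * g) z v = _
  rw [this]
  simp [DD]; ring

lemma J_mulint {n : ℕ} {f g : ℝ × (Fin n → ℝ) → ℝ} (hf : MemLp f 2 volume) (hg : MemLp g 2 volume) :
    Integrable (fun p => f p * g p) (volume.restrict (HS n)) :=
  (MemLp.integrable_mul hf hg).restrict

lemma J_ibp {n : ℕ} {f g : ℝ × (Fin n → ℝ) → ℝ} (hf : CSF f) (hg : CSF g) (j : Fin n) :
    ∫ p in HS n, f p * pdx j g p = - ∫ p in HS n, pdx j f p * g p := by
  have h1 := J_X (hg.mul_left hf.1) j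
  have h2 : ∀ p, pdx j (fun z => f z * g z) p = f p * pdx j g p + pdx j f p * g p := fun p =>
    DD_mul hf hg _ p
  simp only [h2] at h1
  rw [integral_add (J_mulint (ML_csf hf) (ML_csf (pdx_csf hg j))) (J_mulint (ML_csf (pdx_csf hf j)) (ML_csf hg))] at h1
  linarith

lemma pdx_comm {n : ℕ} {f : ℝ × (Fin n → ℝ) → ℝ} (hf : CSF f) (j k : Fin n) :
    pdx j (pdx k f) = pdx k (pdx j f) := DD_comm hf _ _

lemma J_mixed {n : ℕ} {u : ℝ × (Fin n → ℝ) → ℝ} (hu : CSF u) (j k : Fin n) :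
    ∫ p in HS n, pdxx j k u p ^ 2 = ∫ p in HS n, pdxx j j u p * pdxx k k u p := by
  have cj := pdx_csf hu j
  have ck := pdx_csf hu k
  have h1 := J_ibp (pdx_csf ck j) ck j
  have h2 := J_ibp (pdx_csf cj j) ck k
  have e : pdx j (pdx j (pdx k u)) = pdx k (pdx j (pdx j u)) := by
    rw [pdx_comm hu j k, pdx_comm cj j k]
  rw [e] at h1
  simp only [pdxx, sq]
  rw [h1, h2]

lemma J_time {n : ℕ} {u : ℝ × (Fin n → ℝ) → ℝ} (hu : CSF u) (j : Fin n) :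
    0 ≤ ∫ p in HS n, pdt u p * pdxx j j u p := by
  have cj := pdx_csf hu j
  have h1 := J_ibp (pdt_csf hu) cj j
  have e : pdx j (pdt u) = pdt (pdx j u) := DD_comm hu _ _
  have h2 := J_T (cj.mul_left cj.1) (fun p => mul_self_nonneg _)
  have h3 : ∀ p, pdt (fun z => pdx j u z * pdx j u z) p = 2 * (pdt (pdx j u) p * pdx j u p) := fun p => by
    have : pdt (fun z => pdx j u z * pdx j u z) p = _ := DD_mul cj cj _ p
    rw [this]
    change pdx j u p * pdt (pdx j u) p + pdt (pdx j u) p * pdx j u p = _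
    ring
  simp only [h3] at h2
  rw [integral_const_mul] at h2
  rw [e] at h1
  simp only [pdxx]
  rw [h1]; linarith

lemma J_young {n : ℕ} {f g c : ℝ × (Fin n → ℝ) → ℝ} (hf : MemLp f 2 volume) (hg : MemLp g 2 volume)
    (hc : Measurable c) {C : ℝ} (hC : ∀ p, |c p| ≤ C) {ε : ℝ} (hε : 0 < ε) :
    |∫ p in HS n, c p * f p * g p| ≤ ε * (∫ p in HS n, g p ^ 2) + C ^ 2 / (4 * ε) * ∫ p in HS n, f p ^ 2 := by
  have hi : Integrable (fun p => c p * f p * g p) (volume.restrict (HS n)) := J_mulint (ML_bmul hf hc hC) hg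
  have hf2 : Integrable (fun p => f p ^ 2) (volume.restrict (HS n)) := hf.integrable_sq.restrict
  have hg2 : Integrable (fun p => g p ^ 2) (volume.restrict (HS n)) := hg.integrable_sq.restrict
  rw [← integral_const_mul, ← integral_const_mul, ← integral_add (hg2.const_mul _) (hf2.const_mul _)]
  refine abs_integral_le_integral_abs.trans (integral_mono hi.abs (I_add (hg2.const_mul _) (hf2.const_mul _)) ?_)
  intro p
  dsimp only
  have h1 : |c p * f p * g p| ≤ C * |f p| * |g p| := by
    rw [abs_mul, abs_mul]
    exact mul_le_mul_of_nonneg_right (mul_le_mul_of_nonneg_right (hC p) (abs_nonneg _)) (abs_nonneg _)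
  refine h1.trans ?_
  rw [← sq_abs (f p), ← sq_abs (g p)]
  have : ε * |g p| ^ 2 + C ^ 2 / (4 * ε) * |f p| ^ 2 - C * |f p| * |g p|
    = (2 * ε * |g p| - C * |f p|) ^ 2 / (4 * ε) := by field_simp; ring
  have h2 : 0 ≤ (2 * ε * |g p| - C * |f p|) ^ 2 / (4 * ε) := by positivity
  linarith

lemma J_young1 {n : ℕ} {f g : ℝ × (Fin n → ℝ) → ℝ} (hf : MemLp f 2 volume) (hg : MemLp g 2 volume)
    {ε : ℝ} (hε : 0 < ε) :
    |∫ p in HS n, f p * g p| ≤ ε * (∫ p in HS n, g p ^ 2) + 1 / (4 * ε) * ∫ p in HS n, f p ^ 2 := by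
  have := J_young (c := fun _ => 1) (C := 1) hf hg measurable_const (by simp) hε
  simpa using this

end PartJ

open MeasureTheory

section PartK

lemma K_bounds {m : ℕ} {δ : ℝ} {a : ℝ × ℝ → Fin (m+1) → Fin (m+1) → ℝ} (h : CoefA δ a) {lam : ℝ} (hlam : 0 < lam)
    {u : ℝ × (Fin (m+1) → ℝ) → ℝ} (hu : CSF u) {N : ℝ} (hN : N = (16 / δ ^ 2 + 16) / δ ^ 2) :
    (∫ p in HS (m+1), (lam * u p) ^ 2 ≤ N * ∫ p in HS (m+1), LF a lam u p ^ 2) ∧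
    ∀ j k : Fin m, ∫ p in HS (m+1), pdxx j.succ k.succ u p ^ 2 ≤ N * ∫ p in HS (m+1), LF a lam u p ^ 2 := by
  have hδ := h.hδ
  have key : ∀ X S : ℝ, δ ^ 2 * X ≤ (16 / δ ^ 2 + 16) * S → X ≤ N * S := by
    intro X S hX
    rw [hN, div_mul_eq_mul_div, le_div_iff₀ (by positivity)]
    linarith
  exact ⟨key _ _ (I_main0 h hlam hu), fun j k => key _ _ (I_main2 h hlam hu j k)⟩

lemma K_id {m : ℕ} {δ : ℝ} {a : ℝ × ℝ → Fin (m+1) → Fin (m+1) → ℝ} (h : CoefA δ a) {lam : ℝ}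
    {u : ℝ × (Fin (m+1) → ℝ) → ℝ} (hu : CSF u) :
    ∫ p in HS (m+1), LF a lam u p * pdxx 0 0 u p =
      (∫ p in HS (m+1), pdt u p * pdxx 0 0 u p)
      + (∑ j, ∑ k, ∫ p in HS (m+1), a (p.1, p.2 0) j k * pdxx j k u p * pdxx 0 0 u p)
      - lam * ∫ p in HS (m+1), u p * pdxx 0 0 u p := by
  have hU := ML_csf (pdxx_csf hu 0 0)
  have i1 := J_mulint (ML_csf (pdt_csf hu)) hU
  have i2 : ∀ j k : Fin (m+1), Integrable (fun p => a (p.1, p.2 0) j k * pdxx j k u p * pdxx 0 0 u p)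
      (volume.restrict (HS (m+1))) := fun j k =>
    J_mulint (ML_bmul (ML_csf (pdxx_csf hu j k)) (coef_meas h j k) (fun p => h.bd _ j k)) hU
  have i3 := J_mulint (ML_csf hu) hU
  have i4 : Integrable (fun p => ∑ j, ∑ k, a (p.1, p.2 0) j k * pdxx j k u p * pdxx 0 0 u p)
      (volume.restrict (HS (m+1))) :=
    integrable_finsetSum _ fun j _ => integrable_finsetSum _ fun k _ => i2 j k
  have e : (∑ j, ∑ k, ∫ p in HS (m+1), a (p.1, p.2 0) j k * pdxx j k u p * pdxx 0 0 u p)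
      = ∫ p in HS (m+1), ∑ j, ∑ k, a (p.1, p.2 0) j k * pdxx j k u p * pdxx 0 0 u p := by
    rw [integral_finsetSum _ fun j _ => integrable_finsetSum _ fun k _ => i2 j k]
    refine Finset.sum_congr rfl fun j _ => ?_
    rw [integral_finsetSum _ fun k _ => i2 j k]
  rw [e, ← integral_const_mul, ← integral_add i1 i4, ← integral_sub (I_add i1 i4) (i3.const_mul _)]
  congr 1
  ext p
  simp only [LF, sub_mul, add_mul, Finset.sum_mul]
  ring

lemma K_main (m : ℕ) (δ : ℝ) (hδ : 0 < δ) : ∃ N0 : ℝ, 0 < N0 ∧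
    ∀ a : ℝ × ℝ → Fin (m+1) → Fin (m+1) → ℝ, CoefA δ a → ∀ lam : ℝ, 0 < lam →
    ∀ u : ℝ × (Fin (m+1) → ℝ) → ℝ, CSF u →
    (∫ p in HS (m+1), (lam * u p) ^ 2 ≤ N0 * ∫ p in HS (m+1), LF a lam u p ^ 2) ∧
    (∀ j, lam * ∫ p in HS (m+1), pdx j u p ^ 2 ≤ N0 * ∫ p in HS (m+1), LF a lam u p ^ 2) ∧
    (∀ j k, ∫ p in HS (m+1), pdxx j k u p ^ 2 ≤ N0 * ∫ p in HS (m+1), LF a lam u p ^ 2) := by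
  obtain ⟨N, hN⟩ : ∃ N, N = (16 / δ ^ 2 + 16) / δ ^ 2 := ⟨_, rfl⟩
  have hNp : 0 < N := by rw [hN]; positivity
  obtain ⟨ε, hε⟩ : ∃ ε, ε = δ / (4 * ((m : ℝ) + 1) ^ 2) := ⟨_, rfl⟩
  have hεp : 0 < ε := by rw [hε]; positivity
  obtain ⟨C1, hC1⟩ : ∃ C1, C1 = δ⁻¹ ^ 2 / (4 * ε) := ⟨_, rfl⟩
  have hC1p : 0 < C1 := by rw [hC1]; positivity
  obtain ⟨ε', hε'⟩ : ∃ ε', ε' = δ / (8 * ((m : ℝ) + 1) * C1) := ⟨_, rfl⟩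
  have hε'p : 0 < ε' := by rw [hε']; positivity
  obtain ⟨D, hD⟩ : ∃ D, D = 1 / (4 * ε) + 2 * m * C1 * (1 / (4 * ε') * N) + m ^ 2 * C1 * N := ⟨_, rfl⟩
  have hDp : 0 < D := by rw [hD]; positivity
  have e1 : ((m : ℝ) + 1) ^ 2 * ε = δ / 4 := by rw [hε]; field_simp
  have e2 : ((m : ℝ) + 1) * C1 * ε' = δ / 8 := by rw [hε']; field_simp
  obtain ⟨N1, hN1⟩ : ∃ N1, N1 = 2 / δ * D + (ε' * (2 / δ * D) + 1 / (4 * ε') * N) + N := ⟨_, rfl⟩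
  have hq1 : 0 < 2 / δ * D := by positivity
  have hq2 : 0 < ε' * (2 / δ * D) + 1 / (4 * ε') * N := by positivity
  refine ⟨N1, by linarith, ?_⟩
  intro a h lam hlam u hu
  obtain ⟨b0, b2⟩ := K_bounds h hlam hu hN
  have hid := K_id h (lam := lam) hu
  obtain ⟨S, hS⟩ : ∃ S, S = ∫ p in HS (m+1), LF a lam u p ^ 2 := ⟨_, rfl⟩
  rw [← hS] at b0 b2 ⊢
  have hS0 : 0 ≤ S := by rw [hS]; exact integral_nonneg fun p => sq_nonneg _
  obtain ⟨X, hX⟩ : ∃ X, X = ∫ p in HS (m+1), pdxx 0 0 u p ^ 2 := ⟨_, rfl⟩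
  have hX0 : 0 ≤ X := by rw [hX]; exact integral_nonneg fun p => sq_nonneg _
  have hU := ML_csf (pdxx_csf hu 0 0)
  have bm : ∀ k : Fin m, ∫ p in HS (m+1), pdxx 0 k.succ u p ^ 2 ≤ ε' * X + 1 / (4 * ε') * (N * S) := by
    intro k
    rw [J_mixed hu 0 k.succ]
    have := (le_abs_self _).trans (J_young1 (ML_csf (pdxx_csf hu k.succ k.succ)) hU hε'p)
    rw [← hX] at this
    have h3 := mul_le_mul_of_nonneg_left (b2 k k) (by positivity : 0 ≤ 1 / (4 * ε'))
    have e : ∫ p in HS (m+1), pdxx 0 0 u p * pdxx k.succ k.succ u p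
      = ∫ p in HS (m+1), pdxx k.succ k.succ u p * pdxx 0 0 u p := by
      congr 1; ext p; ring
    rw [e]; linarith
  have bm' : ∀ k : Fin m, ∫ p in HS (m+1), pdxx k.succ 0 u p ^ 2 ≤ ε' * X + 1 / (4 * ε') * (N * S) := by
    intro k
    have : pdxx k.succ 0 u = pdxx 0 k.succ u := pdx_comm hu _ _
    rw [this]; exact bm k
  have hT : ∀ j k : Fin (m+1), -(ε * X + C1 * ∫ p in HS (m+1), pdxx j k u p ^ 2) ≤
      ∫ p in HS (m+1), a (p.1, p.2 0) j k * pdxx j k u p * pdxx 0 0 u p := by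
    intro j k
    have := (abs_le.1 (J_young (ML_csf (pdxx_csf hu j k)) hU (coef_meas h j k) (fun p => h.bd _ j k) hεp)).1
    rw [← hX, ← hC1] at this
    exact this
  have hT0 : δ * X ≤ ∫ p in HS (m+1), a (p.1, p.2 0) 0 0 * pdxx 0 0 u p * pdxx 0 0 u p := by
    rw [hX, ← integral_const_mul]
    refine integral_mono (hU.integrable_sq.restrict.const_mul _) (J_mulint (ML_bmul hU (coef_meas h 0 0) (fun p => h.bd _ 0 0)) hU) ?_
    intro p
    dsimp only
    have := mul_le_mul_of_nonneg_right (h.diag (p.1, p.2 0) 0).1 (sq_nonneg (pdxx 0 0 u p))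
    linarith
  have l1 : (∫ p in HS (m+1), LF a lam u p * pdxx 0 0 u p) ≤ ε * X + 1 / (4 * ε) * S := by
    have := (le_abs_self _).trans (J_young1 (LF_ml h lam hu) hU hεp)
    rw [← hX, ← hS] at this; exact this
  have l2 := J_time hu 0
  have l3 : ∫ p in HS (m+1), u p * pdxx 0 0 u p ≤ 0 := by
    have := J_ibp hu (pdx_csf hu 0) 0
    simp only [pdxx]
    rw [this]
    have h4 : 0 ≤ ∫ p in HS (m+1), pdx 0 u p * pdx 0 u p := integral_nonneg fun p => mul_self_nonneg _
    linarith
  have l3' : lam * ∫ p in HS (m+1), u p * pdxx 0 0 u p ≤ 0 := mul_nonpos_of_nonneg_of_nonpos hlam.le l3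
  obtain ⟨A, hA⟩ : ∃ A, A = ε * X + C1 * (ε' * X + 1 / (4 * ε') * (N * S)) := ⟨_, rfl⟩
  obtain ⟨B, hB⟩ : ∃ B, B = ε * X + C1 * (N * S) := ⟨_, rfl⟩
  have t1 : ∀ k : Fin m, -A ≤ ∫ p in HS (m+1), a (p.1, p.2 0) 0 k.succ * pdxx 0 k.succ u p * pdxx 0 0 u p := by
    intro k
    have := mul_le_mul_of_nonneg_left (bm k) hC1p.le
    linarith [hT 0 k.succ]
  have t2 : ∀ k : Fin m, -A ≤ ∫ p in HS (m+1), a (p.1, p.2 0) k.succ 0 * pdxx k.succ 0 u p * pdxx 0 0 u p := by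
    intro k
    have := mul_le_mul_of_nonneg_left (bm' k) hC1p.le
    linarith [hT k.succ 0]
  have t3 : ∀ j k : Fin m, -B ≤ ∫ p in HS (m+1), a (p.1, p.2 0) j.succ k.succ * pdxx j.succ k.succ u p * pdxx 0 0 u p := by
    intro j k
    have := mul_le_mul_of_nonneg_left (b2 j k) hC1p.le
    linarith [hT j.succ k.succ]
  have tot : δ * X - m * A - m * (A + m * B) ≤
      ∑ j, ∑ k, ∫ p in HS (m+1), a (p.1, p.2 0) j k * pdxx j k u p * pdxx 0 0 u p := by
    rw [Fin.sum_univ_succ]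
    have s1 : δ * X - m * A ≤ ∑ k, ∫ p in HS (m+1), a (p.1, p.2 0) 0 k * pdxx 0 k u p * pdxx 0 0 u p := by
      rw [Fin.sum_univ_succ]
      have := Finset.sum_le_sum (s := Finset.univ) fun k _ => t1 k
      simp at this
      linarith
    have s2 : ∀ j : Fin m, -(A + m * B) ≤ ∑ k, ∫ p in HS (m+1), a (p.1, p.2 0) j.succ k * pdxx j.succ k u p * pdxx 0 0 u p := by
      intro j
      rw [Fin.sum_univ_succ]
      have := Finset.sum_le_sum (s := Finset.univ) fun k _ => t3 j k
      simp at this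
      linarith [t2 j]
    have := Finset.sum_le_sum (s := Finset.univ) fun k _ => s2 k
    rw [Finset.sum_const, Finset.card_univ, Fintype.card_fin, nsmul_eq_mul] at this
    linarith
  have hXb : X ≤ 2 / δ * D * S := by
    have f1 : δ * X ≤ ε * X + 1 / (4 * ε) * S + m * A + m * (A + m * B) := by linarith
    have f2 : ε * X + 1 / (4 * ε) * S + m * A + m * (A + m * B)
        = (((m:ℝ) + 1) ^ 2 * ε) * X + 2 * (((m:ℝ) + 1) * C1 * ε') * X - 2 * (C1 * ε') * X + D * S := by
      rw [hA, hB, hD]; ring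
    have f3 : 0 ≤ C1 * ε' * X := by positivity
    rw [f2, e1, e2] at f1
    have f4 : δ * X ≤ 2 * D * S := by nlinarith
    have : 2 / δ * D * S = (2 * D * S) / δ := by ring
    rw [this, le_div_iff₀ hδ]; linarith
  have p1 : 0 ≤ 2 / δ * D * S := by positivity
  have p2 : 0 ≤ (ε' * (2 / δ * D) + 1 / (4 * ε') * N) * S := by positivity
  have p3 : 0 ≤ N * S := by positivity
  have hNS : N1 * S = 2 / δ * D * S + (ε' * (2 / δ * D) + 1 / (4 * ε') * N) * S + N * S := by rw [hN1]; ring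
  have hmx : ε' * X + 1 / (4 * ε') * (N * S) ≤ N1 * S := by
    have := mul_le_mul_of_nonneg_left hXb hε'p.le
    have e : (ε' * (2 / δ * D) + 1 / (4 * ε') * N) * S = ε' * (2 / δ * D * S) + 1 / (4 * ε') * (N * S) := by ring
    linarith
  have hY : ∀ j k, ∫ p in HS (m+1), pdxx j k u p ^ 2 ≤ N1 * S := by
    intro j k
    refine Fin.cases ?_ (fun j => ?_) j <;> refine Fin.cases ?_ (fun k => ?_) k
    · rw [← hX]; linarith
    · exact (bm k).trans hmx
    · exact (bm' j).trans hmx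
    · linarith [b2 j k]
  have hb0 : ∫ p in HS (m+1), (lam * u p) ^ 2 ≤ N1 * S := by linarith
  refine ⟨hb0, ?_, hY⟩
  intro j
  have i1 := J_ibp hu (pdx_csf hu j) j
  have i2 := (abs_le.1 (J_young1 (ML_csf (hu.cmul lam)) (ML_csf (pdxx_csf hu j j)) (ε := 1/2) (by norm_num))).1
  have i3 : ∫ p in HS (m+1), lam * u p * pdxx j j u p = - (lam * ∫ p in HS (m+1), pdx j u p ^ 2) := by
    simp only [mul_assoc]
    rw [integral_const_mul]
    simp only [pdxx]
    rw [i1]; simp only [sq]; ring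
  rw [i3] at i2
  have := hY j j
  norm_num at i2
  linarith

end PartK

open MeasureTheory

section PartL

lemma L_zero {n : ℕ} {g : ℝ × (Fin n → ℝ) → ℝ} (hg : CSF g) {T : ℝ} (h0 : ∀ q : ℝ × (Fin n → ℝ), T ≤ q.1 → g q = 0)
    (v : ℝ × (Fin n → ℝ)) : ∀ q : ℝ × (Fin n → ℝ), T ≤ q.1 → DD v g q = 0 := by
  have h1 : ∀ q : ℝ × (Fin n → ℝ), T < q.1 → DD v g q = 0 := by
    intro q hq
    have ho : IsOpen {q : ℝ × (Fin n → ℝ) | T < q.1} := isOpen_lt continuous_const continuous_fst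
    have : g =ᶠ[nhds q] fun _ => 0 := by
      filter_upwards [ho.mem_nhds hq] with z hz
      exact h0 z (le_of_lt hz)
    simp only [DD]
    rw [this.fderiv_eq]; simp
  intro q hq
  have hc : Continuous (fun s : ℝ => DD v g (q.1 + s, q.2)) := (hg.dd v).cont.comp (by fun_prop)
  have ht : Filter.Tendsto (fun s : ℝ => DD v g (q.1 + s, q.2)) (nhdsWithin 0 (Set.Ioi 0)) (nhds (DD v g q)) := by
    have := hc.tendsto 0
    simp only [add_zero] at this
    exact this.mono_left nhdsWithin_le_nhds
  have ht2 : Filter.Tendsto (fun s : ℝ => DD v g (q.1 + s, q.2)) (nhdsWithin 0 (Set.Ioi 0)) (nhds 0) := by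
    apply tendsto_const_nhds.congr'
    filter_upwards [self_mem_nhdsWithin] with s hs
    symm; apply h1
    simp only [Set.mem_Ioi] at hs
    simp only; linarith
  exact tendsto_nhds_unique ht ht2

lemma L_set {n : ℕ} {T : ℝ} {g : ℝ × (Fin n → ℝ) → ℝ} (h0 : ∀ q : ℝ × (Fin n → ℝ), T ≤ q.1 → g q = 0) :
    ∫ q in OmegaT n T, g q = ∫ q in HS n, g q := by
  symm
  apply setIntegral_eq_of_subset_of_forall_sdiff_eq_zero (HS_meas n)
  · intro q hq; exact hq.1.1
  · intro q hq
    apply h0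
    by_contra hn
    exact hq.2 ⟨⟨hq.1, not_le.1 hn⟩, Set.mem_univ _⟩

/-- exponential weight -/
noncomputable def EW {n : ℕ} (lam : ℝ) (u : ℝ × (Fin n → ℝ) → ℝ) : ℝ × (Fin n → ℝ) → ℝ :=
  fun p => Real.exp (lam * p.1) * u p

lemma EW_csf {n : ℕ} (lam : ℝ) {u : ℝ × (Fin n → ℝ) → ℝ} (hu : CSF u) : CSF (EW lam u) :=
  hu.mul_left (by fun_prop)

lemma EW_dd {n : ℕ} (lam : ℝ) {u : ℝ × (Fin n → ℝ) → ℝ} (hu : CSF u) (v p : ℝ × (Fin n → ℝ)) :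
    DD v (EW lam u) p = Real.exp (lam * p.1) * (DD v u p + lam * v.1 * u p) := by
  have h1 : HasFDerivAt (fun p : ℝ × (Fin n → ℝ) => Real.exp (lam * p.1))
      (Real.exp (lam * p.1) • (lam • ContinuousLinearMap.fst ℝ ℝ (Fin n → ℝ))) p :=
    ((hasFDerivAt_fst (𝕜 := ℝ) (p := p)).const_mul lam).exp
  have := (h1.mul (hu.diff p).hasFDerivAt).fderiv
  change fderiv ℝ ((fun p : ℝ × (Fin n → ℝ) => Real.exp (lam * p.1)) * u) p v = _
  rw [this]
  simp [DD]; ring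

lemma EW_t {n : ℕ} (lam : ℝ) {u : ℝ × (Fin n → ℝ) → ℝ} (hu : CSF u) (p : ℝ × (Fin n → ℝ)) :
    pdt (EW lam u) p = Real.exp (lam * p.1) * (pdt u p + lam * u p) := by
  have := EW_dd lam hu (1, 0) p
  simp only [mul_one] at this
  exact this

lemma EW_x {n : ℕ} (lam : ℝ) {u : ℝ × (Fin n → ℝ) → ℝ} (hu : CSF u) (j : Fin n) :
    pdx j (EW lam u) = EW lam (pdx j u) := by
  ext p
  have := EW_dd lam hu (0, Pi.single j 1) p
  simp only [mul_zero, zero_mul, add_zero] at this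
  exact this

lemma EW_xx {n : ℕ} (lam : ℝ) {u : ℝ × (Fin n → ℝ) → ℝ} (hu : CSF u) (j k : Fin n) :
    pdxx j k (EW lam u) = EW lam (pdxx j k u) := by
  simp only [pdxx]
  rw [EW_x lam hu k, EW_x lam (pdx_csf hu k) j]

lemma EW_ge {n : ℕ} {lam : ℝ} (hl : 0 ≤ lam) {u : ℝ × (Fin n → ℝ) → ℝ} (hu : CSF u) :
    ∫ p in HS n, u p ^ 2 ≤ ∫ p in HS n, EW lam u p ^ 2 := by
  refine setIntegral_mono_on (ML_csf hu).integrable_sq.restrict (ML_csf (EW_csf lam hu)).integrable_sq.restrict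
    (HS_meas n) ?_
  intro p hp
  have hp : 0 < p.1 := hp
  simp only [EW, mul_pow]
  have h1 : 1 ≤ Real.exp (lam * p.1) := Real.one_le_exp (by positivity)
  have h2 : 1 ≤ Real.exp (lam * p.1) ^ 2 := one_le_pow₀ h1
  nlinarith [sq_nonneg (u p)]

/-- full operator -/
noncomputable def LO {m : ℕ} (a : ℝ × ℝ → Fin (m+1) → Fin (m+1) → ℝ) (b : ℝ × (Fin (m+1) → ℝ) → Fin (m+1) → ℝ)
    (c : ℝ × (Fin (m+1) → ℝ) → ℝ) (u : ℝ × (Fin (m+1) → ℝ) → ℝ) : ℝ × (Fin (m+1) → ℝ) → ℝ := fun q =>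
  pdt u q + (∑ j, ∑ k, a (q.1, q.2 0) j k * pdxx j k u q) + (∑ j, b q j * pdx j u q) + c q * u q

lemma LF_EW {m : ℕ} (a : ℝ × ℝ → Fin (m+1) → Fin (m+1) → ℝ) (b : ℝ × (Fin (m+1) → ℝ) → Fin (m+1) → ℝ)
    (c : ℝ × (Fin (m+1) → ℝ) → ℝ) {u : ℝ × (Fin (m+1) → ℝ) → ℝ} (hu : CSF u) (lam : ℝ) (p : ℝ × (Fin (m+1) → ℝ)) :
    LF a lam (EW lam u) p = Real.exp (lam * p.1) * LO a b c u p
      - (∑ j, b p j * pdx j (EW lam u) p) - c p * EW lam u p := by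
  have e1 : ∑ j, ∑ k, a (p.1, p.2 0) j k * pdxx j k (EW lam u) p
      = Real.exp (lam * p.1) * ∑ j, ∑ k, a (p.1, p.2 0) j k * pdxx j k u p := by
    simp only [Finset.mul_sum]
    refine Finset.sum_congr rfl fun j _ => Finset.sum_congr rfl fun k _ => ?_
    rw [EW_xx lam hu]; simp only [EW]; ring
  have e2 : ∑ j, b p j * pdx j (EW lam u) p = Real.exp (lam * p.1) * ∑ j, b p j * pdx j u p := by
    simp only [Finset.mul_sum]
    refine Finset.sum_congr rfl fun j _ => ?_
    rw [EW_x lam hu]; simp only [EW]; ring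
  simp only [LF, LO]
  rw [e1, e2, EW_t lam hu]
  simp only [EW]
  ring

lemma L_sumsq {n : ℕ} {K : ℝ} (b w : Fin n → ℝ) (hb : ∀ j, |b j| ≤ K) :
    (∑ j, b j * w j) ^ 2 ≤ n * K ^ 2 * ∑ j, w j ^ 2 := by
  have := sq_sum_le_card_mul_sum_sq (s := Finset.univ) (f := fun j => b j * w j)
  simp only [Finset.card_univ, Fintype.card_fin] at this
  refine this.trans ?_
  rw [mul_assoc]
  refine mul_le_mul_of_nonneg_left ?_ (Nat.cast_nonneg n)
  rw [Finset.mul_sum]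
  refine Finset.sum_le_sum fun j _ => ?_
  rw [mul_pow]
  refine mul_le_mul_of_nonneg_right ?_ (sq_nonneg _)
  exact sq_le_sq.2 ((hb j).trans (le_abs_self K))

end PartL

open MeasureTheory

section PartM

variable {m : ℕ} {a : ℝ × ℝ → Fin (m+1) → Fin (m+1) → ℝ} {b : ℝ × (Fin (m+1) → ℝ) → Fin (m+1) → ℝ}
    {c : ℝ × (Fin (m+1) → ℝ) → ℝ} {u : ℝ × (Fin (m+1) → ℝ) → ℝ} {δ K T : ℝ}

lemma LO_ml (h : CoefA δ a) (hb : ∀ j, Measurable fun q => b q j) (hc : Measurable c)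
    (hbK : ∀ q j, |b q j| ≤ K) (hcK : ∀ q, |c q| ≤ K) (hu : CSF u) : MemLp (LO a b c u) 2 volume := by
  refine (((ML_csf (pdt_csf hu)).add (memLp_finsetSum _ fun j _ => memLp_finsetSum _ fun k _ => ?_)).add
    (memLp_finsetSum _ fun j _ => ?_)).add (ML_bmul (ML_csf hu) hc hcK)
  · exact ML_bmul (ML_csf (pdxx_csf hu j k)) (coef_meas h j k) (fun p => h.bd _ j k)
  · exact ML_bmul (ML_csf (pdx_csf hu j)) (hb j) (fun p => hbK p j)

lemma M_zero (hu : CSF u) (h0 : ∀ q : ℝ × (Fin (m+1) → ℝ), T ≤ q.1 → u q = 0) :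
    (∀ q : ℝ × (Fin (m+1) → ℝ), T ≤ q.1 → pdt u q = 0) ∧
    (∀ j, ∀ q : ℝ × (Fin (m+1) → ℝ), T ≤ q.1 → pdx j u q = 0) ∧
    (∀ j k, ∀ q : ℝ × (Fin (m+1) → ℝ), T ≤ q.1 → pdxx j k u q = 0) :=
  ⟨L_zero hu h0 _, fun j => L_zero hu h0 _, fun j k => L_zero (pdx_csf hu k) (L_zero hu h0 _) _⟩

lemma LO_zero (hu : CSF u) (h0 : ∀ q : ℝ × (Fin (m+1) → ℝ), T ≤ q.1 → u q = 0) :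
    ∀ q : ℝ × (Fin (m+1) → ℝ), T ≤ q.1 → LO a b c u q = 0 := by
  obtain ⟨h1, h2, h3⟩ := M_zero hu h0
  intro q hq
  simp [LO, h0 q hq, h1 q hq, fun j => h2 j q hq, fun j k => h3 j k q hq]

lemma M_S (h : CoefA δ a) (hb : ∀ j, Measurable fun q => b q j) (hc : Measurable c)
    (hbK : ∀ q j, |b q j| ≤ K) (hcK : ∀ q, |c q| ≤ K) (hu : CSF u)
    (h0 : ∀ q : ℝ × (Fin (m+1) → ℝ), T ≤ q.1 → u q = 0) {lam : ℝ} (hlam : 0 ≤ lam) :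
    ∫ p in HS (m+1), LF a lam (EW lam u) p ^ 2 ≤
      3 * (Real.exp (lam * T) ^ 2 * ∫ p in HS (m+1), LO a b c u p ^ 2)
      + 3 * (((m+1 : ℕ) : ℝ) * K ^ 2 * ∑ j, ∫ p in HS (m+1), pdx j (EW lam u) p ^ 2)
      + 3 * (K ^ 2 * ∫ p in HS (m+1), EW lam u p ^ 2) := by
  have hv := EW_csf lam hu
  have i1 : Integrable (fun p => LO a b c u p ^ 2) (volume.restrict (HS (m+1))) :=
    (LO_ml h hb hc hbK hcK hu).integrable_sq.restrict
  have i2 : ∀ j : Fin (m+1), Integrable (fun p => pdx j (EW lam u) p ^ 2) (volume.restrict (HS (m+1))) :=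
    fun j => (ML_csf (pdx_csf hv j)).integrable_sq.restrict
  have i3 : Integrable (fun p => EW lam u p ^ 2) (volume.restrict (HS (m+1))) :=
    (ML_csf hv).integrable_sq.restrict
  have i2' : Integrable (fun p => ∑ j, pdx j (EW lam u) p ^ 2) (volume.restrict (HS (m+1))) :=
    integrable_finsetSum _ fun j _ => i2 j
  rw [← integral_finsetSum _ fun j _ => i2 j]
  simp only [← integral_const_mul]
  have j1 := (i1.const_mul (Real.exp (lam * T) ^ 2)).const_mul 3
  have j2 := (i2'.const_mul (((m+1 : ℕ) : ℝ) * K ^ 2)).const_mul 3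
  have j3 := (i3.const_mul (K ^ 2)).const_mul 3
  rw [← integral_add j1 j2, ← integral_add (I_add j1 j2) j3]
  refine setIntegral_mono_on (LF_ml h lam hv).integrable_sq.restrict (I_add (I_add j1 j2) j3) (HS_meas _) ?_
  intro p hp
  rw [LF_EW a b c hu lam p]
  have k1 := L_sumsq (b p) (fun j => pdx j (EW lam u) p) (hbK p)
  have k2 : (c p * EW lam u p) ^ 2 ≤ K ^ 2 * EW lam u p ^ 2 := by
    rw [mul_pow]
    exact mul_le_mul_of_nonneg_right (sq_le_sq.2 ((hcK p).trans (le_abs_self K))) (sq_nonneg _)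
  have k3 : (Real.exp (lam * p.1) * LO a b c u p) ^ 2 ≤ Real.exp (lam * T) ^ 2 * LO a b c u p ^ 2 := by
    rcases le_total T p.1 with hT | hT
    · rw [LO_zero hu h0 p hT]; simp
    · rw [mul_pow]
      refine mul_le_mul_of_nonneg_right ?_ (sq_nonneg _)
      exact pow_le_pow_left₀ (Real.exp_pos _).le (Real.exp_le_exp.2 (mul_le_mul_of_nonneg_left hT hlam)) 2
  have k4 : ∀ x y z : ℝ, (x - y - z) ^ 2 ≤ 3 * x ^ 2 + 3 * y ^ 2 + 3 * z ^ 2 := by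
    intro x y z
    nlinarith [sq_nonneg (x + y), sq_nonneg (x + z), sq_nonneg (y - z)]
  refine (k4 _ _ _).trans ?_
  linarith

lemma M_t (h : CoefA δ a) (hb : ∀ j, Measurable fun q => b q j) (hc : Measurable c)
    (hbK : ∀ q j, |b q j| ≤ K) (hcK : ∀ q, |c q| ≤ K) (hu : CSF u) :
    ∫ p in HS (m+1), pdt u p ^ 2 ≤
      4 * (∫ p in HS (m+1), LO a b c u p ^ 2)
      + 4 * (((m+1 : ℕ) : ℝ) * (((m+1 : ℕ) : ℝ) * δ⁻¹ ^ 2) * ∑ j, ∑ k, ∫ p in HS (m+1), pdxx j k u p ^ 2)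
      + 4 * (((m+1 : ℕ) : ℝ) * K ^ 2 * ∑ j, ∫ p in HS (m+1), pdx j u p ^ 2)
      + 4 * (K ^ 2 * ∫ p in HS (m+1), u p ^ 2) := by
  have i1 : Integrable (fun p => LO a b c u p ^ 2) (volume.restrict (HS (m+1))) :=
    (LO_ml h hb hc hbK hcK hu).integrable_sq.restrict
  have i2 : ∀ j : Fin (m+1), Integrable (fun p => pdx j u p ^ 2) (volume.restrict (HS (m+1))) :=
    fun j => (ML_csf (pdx_csf hu j)).integrable_sq.restrict
  have i4 : ∀ j k : Fin (m+1), Integrable (fun p => pdxx j k u p ^ 2) (volume.restrict (HS (m+1))) :=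
    fun j k => (ML_csf (pdxx_csf hu j k)).integrable_sq.restrict
  have i3 : Integrable (fun p => u p ^ 2) (volume.restrict (HS (m+1))) :=
    (ML_csf hu).integrable_sq.restrict
  have i2' : Integrable (fun p => ∑ j, pdx j u p ^ 2) (volume.restrict (HS (m+1))) :=
    integrable_finsetSum _ fun j _ => i2 j
  have i4' : ∀ j, Integrable (fun p => ∑ k, pdxx j k u p ^ 2) (volume.restrict (HS (m+1))) :=
    fun j => integrable_finsetSum _ fun k _ => i4 j k
  have i4'' : Integrable (fun p => ∑ j, ∑ k, pdxx j k u p ^ 2) (volume.restrict (HS (m+1))) :=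
    integrable_finsetSum _ fun j _ => i4' j
  have e4 : ∑ j, ∑ k, ∫ p in HS (m+1), pdxx j k u p ^ 2 = ∫ p in HS (m+1), ∑ j, ∑ k, pdxx j k u p ^ 2 := by
    rw [integral_finsetSum _ fun j _ => i4' j]
    refine Finset.sum_congr rfl fun j _ => ?_
    rw [integral_finsetSum _ fun k _ => i4 j k]
  rw [e4, ← integral_finsetSum _ fun j _ => i2 j]
  simp only [← integral_const_mul]
  have j1 := i1.const_mul 4
  have j4 := (i4''.const_mul (((m+1 : ℕ) : ℝ) * (((m+1 : ℕ) : ℝ) * δ⁻¹ ^ 2))).const_mul 4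
  have j2 := (i2'.const_mul (((m+1 : ℕ) : ℝ) * K ^ 2)).const_mul 4
  have j3 := (i3.const_mul (K ^ 2)).const_mul 4
  rw [← integral_add j1 j4, ← integral_add (I_add j1 j4) j2, ← integral_add (I_add (I_add j1 j4) j2) j3]
  refine integral_mono (ML_csf (pdt_csf hu)).integrable_sq.restrict (I_add (I_add (I_add j1 j4) j2) j3) ?_
  intro p
  dsimp only
  have k1 := L_sumsq (b p) (fun j => pdx j u p) (hbK p)
  have k2 : (c p * u p) ^ 2 ≤ K ^ 2 * u p ^ 2 := by
    rw [mul_pow]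
    exact mul_le_mul_of_nonneg_right (sq_le_sq.2 ((hcK p).trans (le_abs_self K))) (sq_nonneg _)
  have k3 : (∑ j, ∑ k, a (p.1, p.2 0) j k * pdxx j k u p) ^ 2 ≤
      ((m+1 : ℕ) : ℝ) * (((m+1 : ℕ) : ℝ) * δ⁻¹ ^ 2) * ∑ j, ∑ k, pdxx j k u p ^ 2 := by
    have := sq_sum_le_card_mul_sum_sq (s := Finset.univ) (f := fun j => ∑ k, a (p.1, p.2 0) j k * pdxx j k u p)
    rw [Finset.card_univ, Fintype.card_fin] at this
    refine this.trans ?_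
    rw [mul_assoc]
    refine mul_le_mul_of_nonneg_left ?_ (Nat.cast_nonneg _)
    rw [Finset.mul_sum]
    refine Finset.sum_le_sum fun j _ => ?_
    exact L_sumsq (fun k => a (p.1, p.2 0) j k) (fun k => pdxx j k u p) (fun k => h.bd _ j k)
  have k4 : ∀ x y z w : ℝ, (x - y - z - w) ^ 2 ≤ 4 * x ^ 2 + 4 * y ^ 2 + 4 * z ^ 2 + 4 * w ^ 2 := by
    intro x y z w
    nlinarith [sq_nonneg (x + y), sq_nonneg (x + z), sq_nonneg (y - z), sq_nonneg (x + w), sq_nonneg (y - w), sq_nonneg (z - w)]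
  have e : pdt u p = LO a b c u p - (∑ j, ∑ k, a (p.1, p.2 0) j k * pdxx j k u p)
      - (∑ j, b p j * pdx j u p) - c p * u p := by simp only [LO]; ring
  rw [e]
  refine (k4 _ _ _ _).trans ?_
  linarith

lemma M_final (m : ℕ) (δ K T : ℝ) (hδ : 0 < δ) : ∃ N2 : ℝ, 0 < N2 ∧
    ∀ (a : ℝ × ℝ → Fin (m+1) → Fin (m+1) → ℝ) (b : ℝ × (Fin (m+1) → ℝ) → Fin (m+1) → ℝ)
    (c : ℝ × (Fin (m+1) → ℝ) → ℝ), CoefA δ a → (∀ j, Measurable fun q => b q j) → Measurable c →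
    (∀ q j, |b q j| ≤ K) → (∀ q, |c q| ≤ K) → ∀ u : ℝ × (Fin (m+1) → ℝ) → ℝ, CSF u →
    (∀ q : ℝ × (Fin (m+1) → ℝ), T ≤ q.1 → u q = 0) →
    (∫ p in HS (m+1), u p ^ 2 ≤ N2 * ∫ p in HS (m+1), LO a b c u p ^ 2) ∧
    (∀ j, ∫ p in HS (m+1), pdx j u p ^ 2 ≤ N2 * ∫ p in HS (m+1), LO a b c u p ^ 2) ∧
    (∀ j k, ∫ p in HS (m+1), pdxx j k u p ^ 2 ≤ N2 * ∫ p in HS (m+1), LO a b c u p ^ 2) := by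
  obtain ⟨N0, hN0, H⟩ := K_main m δ hδ
  obtain ⟨n, hn⟩ : ∃ n : ℝ, n = ((m+1 : ℕ) : ℝ) := ⟨_, rfl⟩
  obtain ⟨lam, hl⟩ : ∃ lam, lam = 1 + 6 * (K ^ 2 * (n ^ 2 + 1) * N0) := ⟨_, rfl⟩
  have hl0 : 0 ≤ K ^ 2 * (n ^ 2 + 1) * N0 := by positivity
  have hl1 : 1 ≤ lam := by linarith
  have hlp : 0 < lam := by linarith
  refine ⟨N0 * (6 * Real.exp (lam * T) ^ 2), by positivity, ?_⟩
  intro a b c h hb hc hbK hcK u hu h0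
  have hv := EW_csf lam hu
  obtain ⟨H1, H2, H3⟩ := H a h lam hlp (EW lam u) hv
  have hS := M_S h hb hc hbK hcK hu h0 hlp.le
  obtain ⟨S, hSd⟩ : ∃ S, S = ∫ p in HS (m+1), LF a lam (EW lam u) p ^ 2 := ⟨_, rfl⟩
  obtain ⟨M, hM⟩ : ∃ M, M = ∫ p in HS (m+1), LO a b c u p ^ 2 := ⟨_, rfl⟩
  rw [← hSd] at hS H1 H2 H3
  rw [← hM] at hS ⊢
  rw [← hn] at hS
  have hS0 : 0 ≤ S := by rw [hSd]; exact integral_nonneg fun p => sq_nonneg _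
  have A1 : lam * ∫ p in HS (m+1), EW lam u p ^ 2 ≤ N0 * S := by
    simp only [mul_pow] at H1
    rw [integral_const_mul] at H1
    have h5 : 0 ≤ ∫ p in HS (m+1), EW lam u p ^ 2 := integral_nonneg fun p => sq_nonneg _
    have h6 : lam ≤ lam ^ 2 := by nlinarith
    exact (mul_le_mul_of_nonneg_right h6 h5).trans H1
  have A2 : lam * ∑ j, ∫ p in HS (m+1), pdx j (EW lam u) p ^ 2 ≤ n * (N0 * S) := by
    rw [Finset.mul_sum]
    refine (Finset.sum_le_sum fun j _ => H2 j).trans ?_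
    simp [hn]
  have hSM : N0 * S ≤ N0 * (6 * Real.exp (lam * T) ^ 2) * M := by
    have s1 := mul_le_mul_of_nonneg_left hS hlp.le
    have n0 : 0 ≤ n := by rw [hn]; positivity
    have s2 := mul_le_mul_of_nonneg_left A2 (by positivity : 0 ≤ 3 * (n * K ^ 2))
    have s3 := mul_le_mul_of_nonneg_left A1 (by positivity : 0 ≤ 3 * K ^ 2)
    have s4 : lam * S ≤ lam * (3 * (Real.exp (lam * T) ^ 2 * M)) + 3 * (K ^ 2 * (n ^ 2 + 1) * N0) * S := by
      linarith
    have s5 : 3 * (K ^ 2 * (n ^ 2 + 1) * N0) = (lam - 1) / 2 := by rw [hl]; ring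
    rw [s5] at s4
    have s6 : lam * S ≤ lam * (6 * Real.exp (lam * T) ^ 2 * M) := by linarith
    have s7 := le_of_mul_le_mul_left s6 hlp
    have := mul_le_mul_of_nonneg_left s7 hN0.le
    linarith
  have up : ∀ X : ℝ, 0 ≤ X → lam * X ≤ N0 * S → X ≤ N0 * (6 * Real.exp (lam * T) ^ 2) * M := by
    intro X hX hX2
    nlinarith
  refine ⟨(EW_ge hlp.le hu).trans (up _ (integral_nonneg fun p => sq_nonneg _) A1), fun j => ?_, fun j k => ?_⟩
  · have := H2 j
    rw [EW_x lam hu] at this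
    exact (EW_ge hlp.le (pdx_csf hu j)).trans (up _ (integral_nonneg fun p => sq_nonneg _) this)
  · have := H3 j k
    rw [EW_xx lam hu] at this
    exact (EW_ge hlp.le (pdxx_csf hu j k)).trans (this.trans hSM)

end PartM

open MeasureTheory

theorem stmt17 (d : ℕ) (hd : 0 < d) (δ : ℝ) (hδ : δ ∈ Set.Ioo (0 : ℝ) 1)
    (K : ℝ) (hK : 0 < K) (T : ℝ) (hT : 0 < T) :
    ∃ N : ℝ, 0 < N ∧
      ∀ (a : ℝ × ℝ → Fin d → Fin d → ℝ)
        (b : ℝ × (Fin d → ℝ) → Fin d → ℝ)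
        (c : ℝ × (Fin d → ℝ) → ℝ),
        (∀ j k, Measurable fun q => a q j k) →
        (∀ j, Measurable fun q => b q j) → Measurable c →
        (∀ q j k, a q j k = a q k j) →
        (∀ q j, |b q j| ≤ K) → (∀ q, |c q| ≤ K) →
        (∀ (q : ℝ × ℝ) (θ : Fin d → ℝ),
          δ * ∑ j, (θ j) ^ 2 ≤ ∑ j, ∑ k, a q j k * θ j * θ k ∧
          ∑ j, ∑ k, a q j k * θ j * θ k ≤ δ⁻¹ * ∑ j, (θ j) ^ 2) →
        ∀ u : ℝ × (Fin d → ℝ) → ℝ, ContDiff ℝ (⊤ : ℕ∞) u → HasCompactSupport u →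
          (∀ q : ℝ × (Fin d → ℝ), T ≤ q.1 → u q = 0) →
          L2NormOn (OmegaT d T) u
              + L2NormOn (OmegaT d T) (pdt u)
              + Real.sqrt (∫ q in OmegaT d T, ∑ j, (pdx j u q) ^ 2)
              + Real.sqrt (∫ q in OmegaT d T, ∑ j, ∑ k, (pdxx j k u q) ^ 2)
            ≤ N * L2NormOn (OmegaT d T) (fun q =>
                pdt u q + (∑ j, ∑ k, a (q.1, q.2 ⟨0, hd⟩) j k * pdxx j k u q)
                  + (∑ j, b q j * pdx j u q) + c q * u q) := by
  obtain ⟨m, rfl⟩ : ∃ m, d = m + 1 := ⟨d - 1, by omega⟩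
  obtain ⟨N2, hN2, H⟩ := M_final m δ K T hδ.1
  obtain ⟨n, hn⟩ : ∃ n : ℝ, n = ((m+1 : ℕ) : ℝ) := ⟨_, rfl⟩
  have n0 : 0 ≤ n := by rw [hn]; positivity
  obtain ⟨N3, hN3⟩ : ∃ N3, N3 = 4 + 4 * (n * (n * δ⁻¹ ^ 2) * (n * (n * N2)))
    + 4 * (n * K ^ 2 * (n * N2)) + 4 * (K ^ 2 * N2) := ⟨_, rfl⟩
  refine ⟨√N2 + √N3 + √(n * N2) + √(n * (n * N2)), by positivity, ?_⟩
  intro a b c ha hb hc hsym hbK hcK hell u hu1 hu2 h0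
  have hu : CSF u := ⟨hu1, hu2⟩
  have hA : CoefA δ a := ⟨hδ.1, hδ.2.le, ha, hsym, hell⟩
  obtain ⟨H0, H1, H2⟩ := H a b c hA hb hc hbK hcK u hu h0
  have Ht := M_t hA hb hc hbK hcK hu
  obtain ⟨z1, z2, z3⟩ := M_zero hu h0
  have zL := LO_zero (a := a) (b := b) (c := c) hu h0
  have hR : L2NormOn (OmegaT (m+1) T) (fun q =>
                pdt u q + (∑ j, ∑ k, a (q.1, q.2 ⟨0, hd⟩) j k * pdxx j k u q)
                  + (∑ j, b q j * pdx j u q) + c q * u q)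
      = √(∫ p in HS (m+1), LO a b c u p ^ 2) := by
    change √(∫ q in OmegaT (m+1) T, LO a b c u q ^ 2) = _
    rw [L_set (fun q hq => by rw [zL q hq]; simp)]
  rw [hR]
  simp only [L2NormOn]
  rw [L_set (g := fun q => u q ^ 2) (fun q hq => by rw [h0 q hq]; simp),
    L_set (g := fun q => pdt u q ^ 2) (fun q hq => by rw [z1 q hq]; simp),
    L_set (g := fun q => ∑ j, pdx j u q ^ 2) (fun q hq => by simp [fun j => z2 j q hq]),
    L_set (g := fun q => ∑ j, ∑ k, pdxx j k u q ^ 2) (fun q hq => by simp [fun j k => z3 j k q hq])]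
  have i2 : ∀ j : Fin (m+1), Integrable (fun p => pdx j u p ^ 2) (volume.restrict (HS (m+1))) :=
    fun j => (ML_csf (pdx_csf hu j)).integrable_sq.restrict
  have i4 : ∀ j k : Fin (m+1), Integrable (fun p => pdxx j k u p ^ 2) (volume.restrict (HS (m+1))) :=
    fun j k => (ML_csf (pdxx_csf hu j k)).integrable_sq.restrict
  have i4' : ∀ j, Integrable (fun p => ∑ k, pdxx j k u p ^ 2) (volume.restrict (HS (m+1))) :=
    fun j => integrable_finsetSum _ fun k _ => i4 j k
  have e4 : ∫ p in HS (m+1), ∑ j, ∑ k, pdxx j k u p ^ 2 = ∑ j, ∑ k, ∫ p in HS (m+1), pdxx j k u p ^ 2 := by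
    rw [integral_finsetSum _ fun j _ => i4' j]
    refine Finset.sum_congr rfl fun j _ => ?_
    rw [integral_finsetSum _ fun k _ => i4 j k]
  rw [e4, integral_finsetSum _ fun j _ => i2 j]
  rw [← hn] at Ht
  generalize (∫ p in HS (m+1), LO a b c u p ^ 2) = M at *
  have G1 : ∑ j, ∫ p in HS (m+1), pdx j u p ^ 2 ≤ n * N2 * M := by
    refine (Finset.sum_le_sum fun j _ => H1 j).trans (le_of_eq ?_)
    rw [Finset.sum_const, Finset.card_univ, Fintype.card_fin, nsmul_eq_mul, hn]; ring
  have G2 : ∑ j, ∑ k, ∫ p in HS (m+1), pdxx j k u p ^ 2 ≤ n * (n * N2) * M := by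
    refine (Finset.sum_le_sum fun j _ => Finset.sum_le_sum fun k _ => H2 j k).trans (le_of_eq ?_)
    rw [Finset.sum_const, Finset.sum_const, Finset.card_univ, Fintype.card_fin, nsmul_eq_mul, nsmul_eq_mul, hn]; ring
  have G3 : ∫ p in HS (m+1), pdt u p ^ 2 ≤ N3 * M := by
    have q1 := mul_le_mul_of_nonneg_left G1 (by positivity : 0 ≤ n * K ^ 2)
    have q2 := mul_le_mul_of_nonneg_left G2 (by positivity : 0 ≤ n * (n * δ⁻¹ ^ 2))
    have q3 := mul_le_mul_of_nonneg_left H0 (by positivity : 0 ≤ K ^ 2)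
    rw [hN3]
    linarith
  have hN30 : 0 ≤ N3 := by rw [hN3]; positivity
  have r : ∀ X A : ℝ, 0 ≤ A → X ≤ A * M → √X ≤ √A * √M := by
    intro X A hA hX
    rw [← Real.sqrt_mul hA]
    exact Real.sqrt_le_sqrt hX
  have r1 := r _ _ hN2.le H0
  have r2 := r _ _ hN30 G3
  have r3 := r _ _ (by positivity) G1
  have r4 := r _ _ (by positivity) G2
  linarith
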